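/- arXiv:1507.00309 — 2 statements merged into one kernel-verified Lean document; each statement's English description precedes it below -/
import Mathlib

section
/- Let G be a finite group and let p be a prime. If the average of the degrees of the irreducible complex characters of G whose degrees are not divisible by p is strictly less than 2(p+1)/(p+3), then G has a normal p-complement. -/
open scoped BigOperators

/-- The set of irreducible complex characters of `G`, viewed as functions `G → ℂ`. -/
def Irr (G : Type) [Monoid G] : Set (G → ℂ) :=
  {f | ∃ V : FDRep ℂ G, CategoryTheory.Simple V ∧ f = V.character}

/-- The degree of a character, i.e. its value at the identity (a natural number). -/
noncomputable def charDeg {G : Type} [One G] (f : G → ℂ) : ℕ := ⌊(f 1).re⌋₊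

/-- The average of the degrees of the characters in a set `S` of characters. -/
noncomputable def acd {G : Type} [One G] (S : Set (G → ℂ)) : ℝ :=
  (∑ᶠ f ∈ S, (f 1).re) / (S.ncard : ℝ)

/-- `G` has a normal `p`-complement: a normal subgroup of order coprime to `p`
whose index is a power of `p`. -/
def HasNormalPComplement (p : ℕ) (G : Type) [Group G] : Prop :=
  ∃ N : Subgroup G, N.Normal ∧ Nat.Coprime (Nat.card N) p ∧ ∃ n : ℕ, N.index = p ^ n

/-!
If `D ⊔ commutator G = ⊤` and `p ∣ D.index`, the permutation character of `G` on the cosets of `D`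
contains the trivial character once and no other linear character, and its degree is divisible by
`p`; so its nonlinear constituents of degree prime to `p` have total degree at least `p - 1`.
The permutation characters twisted by the linear characters `l` of `G` are induced from the
pairwise distinct restrictions of the `l` to `D`, so together they contain each `χ` at most `χ 1`
times. Summing over all `l` gives enough nonlinear characters to force the average degree up to
`2 * (p + 1) / (p + 3)`.

Otherwise every supplement of the commutator subgroup has index prime to `p`. A minimal supplement
`D` meets the commutator subgroup inside its own Frattini subgroup, hence is nilpotent, and its
projection onto its Sylow `p`-subgroup extends to `G`: this is done one central extension by a
group of order `p` at a time, using the transfer to lift homomorphisms and the Frattini property to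
extend homomorphisms from `D` to a group of order `p`. The kernel of the extension is the normal
`p`-complement.
-/

section CentralExtensions

open scoped IsMulCommutative

open Subgroup (center)

lemma exists_hom_eq_of_mem_center {K A : Type*} [Group K] [CommGroup A] {H : Subgroup K}
    [H.FiniteIndex] (hA : (Nat.card A).Coprime H.index) (φ : H →* A) :
    ∃ ψ : K →* A, ∀ z : H, (z : K) ∈ center K → ψ z = φ z := by
  let e : A ≃* A := MulEquiv.ofBijective (powMonoidHom H.index) hA.pow_left_bijective
  refine ⟨e.symm.toMonoidHom.comp φ.transfer, fun z hz => ?_⟩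
  have htransfer : φ.transfer (z : K) = φ (z ^ H.index) :=
    φ.transfer_eq_pow z fun k g _ => by
      rw [mul_assoc, ← Subgroup.mem_center_iff.1 (pow_mem hz k) g, inv_mul_cancel_left]
  exact e.symm_apply_eq.2 (htransfer.trans (map_pow φ z _))

lemma isMulCommutative_of_le_center {E : Type*} [Group E] {Z : Subgroup E} (hZ : Z ≤ center E) :
    IsMulCommutative Z :=
  ⟨⟨fun a b => Subtype.ext (Subgroup.mem_center_iff.1 (hZ b.2) a)⟩⟩

variable {G X E E' : Type*} [Group G] [Group X] [Group E] [Group E']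

/-- The pointwise product `x ↦ c x * s x` of a homomorphism `s` and a homomorphism `c` into a
central subgroup; it is the way homomorphisms into a central extension are modified. -/
def centralMul {Z : Subgroup E} (hZ : Z ≤ center E) (c : X →* Z) (s : X →* E) : X →* E :=
  MonoidHom.mk' (fun x => c x * s x) fun x y => by
    have hcomm := Subgroup.mem_center_iff.1 (hZ (c y).2) (s x)
    simp only [map_mul, Subgroup.coe_mul, mul_assoc]
    rw [← mul_assoc (s x), hcomm, mul_assoc]

@[simp]
lemma centralMul_apply {Z : Subgroup E} (hZ : Z ≤ center E) (c : X →* Z) (s : X →* E) (x : X) :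
    centralMul hZ c s x = c x * s x :=
  rfl

lemma comp_centralMul {q : E →* E'} (hq : q.ker ≤ center E) (c : X →* q.ker) (s : X →* E) :
    q.comp (centralMul hq c s) = q.comp s :=
  MonoidHom.ext fun x => by simp [q.mem_ker.1 (c x).2]

lemma exists_eq_centralMul {q : E →* E'} (hq : q.ker ≤ center E) {r s : X →* E}
    (h : q.comp r = q.comp s) : ∃ c : X →* q.ker, r = centralMul hq c s := by
  have hmem (x : X) : r x * (s x)⁻¹ ∈ q.ker := by
    rw [q.mem_ker, map_mul, map_inv, mul_inv_eq_one]
    exact DFunLike.congr_fun h x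
  refine ⟨MonoidHom.mk' (fun x => ⟨r x * (s x)⁻¹, hmem x⟩) fun x y => Subtype.ext ?_,
    MonoidHom.ext fun x => by simp⟩
  have hcomm := Subgroup.mem_center_iff.1 (hq (hmem y)) (s x)⁻¹
  simp only [map_mul, mul_inv_rev, Subgroup.coe_mul]
  rw [mul_assoc (r x) (s x)⁻¹, hcomm]
  simp only [mul_assoc]

lemma exists_comp_eq_of_surjective {π : X →* G} (hπ : Function.Surjective π) {f : X →* E}
    (h : π.ker ≤ f.ker) : ∃ g : G →* E, g.comp π = f :=
  ⟨π.liftOfSurjective hπ ⟨f, h⟩, π.liftOfRightInverse_comp _ (Function.rightInverse_surjInv hπ) _⟩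

variable {D : Subgroup G} [D.FiniteIndex] {q : E →* E'}

lemma exists_lift_of_central_ker (hq : Function.Surjective q) (hker : q.ker ≤ center E)
    (hcard : (Nat.card q.ker).Coprime D.index) {r : D →* E} {t : G →* E'}
    (hr : q.comp r = t.domRestrict D) : ∃ s : G →* E, q.comp s = t := by
  have := isMulCommutative_of_le_center hker
  -- `π : K → G` is the pullback of `q` along `t`: a central extension, which `r` splits over `D`.
  let K : Subgroup (G × E) := (t.comp (.fst G E)).eqLocus (q.comp (.snd G E))
  let π : K →* G := (MonoidHom.fst G E).comp K.subtype
  let e : K →* E := (MonoidHom.snd G E).comp K.subtype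
  have hπe : t.comp π = q.comp e := MonoidHom.ext fun x => x.2
  have hπ : Function.Surjective π := fun g =>
    let ⟨y, hy⟩ := hq (t g); ⟨⟨(g, y), hy.symm⟩, rfl⟩
  let H : Subgroup K := D.comap π
  have hindex : H.index = D.index := D.index_comap_of_surjective hπ
  have : H.FiniteIndex := ⟨hindex ▸ Subgroup.FiniteIndex.index_ne_zero⟩
  have hres : q.comp (e.domRestrict H) = q.comp (r.comp (π.subgroupComap D)) :=
    MonoidHom.ext fun x =>
      (DFunLike.congr_fun hπe x.1).symm.trans (DFunLike.congr_fun hr (π.subgroupComap D x)).symm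
  obtain ⟨φ, hφ⟩ := exists_eq_centralMul hker hres
  obtain ⟨ψ, hψ⟩ := exists_hom_eq_of_mem_center (hindex ▸ hcard) φ
  have hkill : π.ker ≤ (centralMul hker ψ⁻¹ e).ker := by
    intro x hx
    have hx1 : π x = 1 := hx
    have hxH : x ∈ H := Subgroup.mem_comap.2 (hx1 ▸ one_mem D)
    have hex : e x ∈ center E := hker <| by
      rw [q.mem_ker, ← MonoidHom.comp_apply, ← hπe, MonoidHom.comp_apply, hx1, map_one]
    have hxc : x ∈ center K := Subgroup.mem_center_iff.2 fun y =>
      Subtype.ext <| Prod.ext (by simp [show x.1.1 = 1 from hx1])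
        (Subgroup.mem_center_iff.1 hex (e y))
    have hrx : r (π.subgroupComap D ⟨x, hxH⟩) = 1 :=
      (congrArg r (Subtype.ext hx1)).trans (map_one r)
    have hφx : e x = φ ⟨x, hxH⟩ := by
      simpa [hrx] using DFunLike.congr_fun hφ ⟨x, hxH⟩
    rw [MonoidHom.mem_ker, centralMul_apply, MonoidHom.inv_apply, hψ ⟨x, hxH⟩ hxc, hφx]
    exact inv_mul_cancel _
  obtain ⟨s, hs⟩ := exists_comp_eq_of_surjective hπ hkill
  refine ⟨s, (MonoidHom.cancel_right hπ).1 ?_⟩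
  rw [MonoidHom.comp_assoc, hs, comp_centralMul, hπe]

lemma exists_extension_of_central_ker (hq : Function.Surjective q) (hker : q.ker ≤ center E)
    (hcard : (Nat.card q.ker).Coprime D.index)
    (hext : ∀ c : D →* q.ker, ∃ C : G →* q.ker, C.domRestrict D = c)
    {r : D →* E} {t : G →* E'} (hr : q.comp r = t.domRestrict D) :
    ∃ s : G →* E, s.domRestrict D = r := by
  obtain ⟨s, rfl⟩ := exists_lift_of_central_ker hq hker hcard hr
  obtain ⟨c, rfl⟩ := exists_eq_centralMul hker (s := s.domRestrict D) hr
  obtain ⟨C, rfl⟩ := hext c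
  exact ⟨centralMul hker C s, rfl⟩

end CentralExtensions

section PGroupQuotients

variable {G : Type*} [Group G] {p : ℕ} [Fact p.Prime]

lemma exists_le_center_card_eq_prime {E : Type*} [Group E] [Finite E] [Nontrivial E]
    (hE : IsPGroup p E) : ∃ Z ≤ Subgroup.center E, Nat.card Z = p := by
  have := hE.center_nontrivial
  have hdvd : p ∣ Nat.card (Subgroup.center E) :=
    (hE.to_subgroup _).card_eq_or_dvd.resolve_left Finite.one_lt_card.ne'
  obtain ⟨z, hz⟩ := exists_prime_orderOf_dvd_card' p hdvd
  exact ⟨Subgroup.zpowers (z : E), Subgroup.zpowers_le.2 z.2, by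
    rw [Nat.card_zpowers, Subgroup.orderOf_coe, hz]⟩

theorem exists_extension_of_isPGroup {D : Subgroup G} [D.FiniteIndex] (hp : ¬ p ∣ D.index)
    (hext : ∀ c : D →* Multiplicative (ZMod p),
      ∃ C : G →* Multiplicative (ZMod p), C.domRestrict D = c)
    {E : Type*} [Group E] [Finite E] (hE : IsPGroup p E) (r : D →* E) :
    ∃ s : G →* E, s.domRestrict D = r := by
  induction hn : Nat.card E using Nat.strong_induction_on generalizing E with
  | _ n ih =>
  cases subsingleton_or_nontrivial E
  · exact ⟨1, MonoidHom.ext fun d => Subsingleton.elim _ _⟩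
  obtain ⟨Z, hZ, hcard⟩ := exists_le_center_card_eq_prime hE
  have : Z.Normal := ⟨fun z hz e => by
    rwa [Subgroup.mem_center_iff.1 (hZ hz) e, mul_inv_cancel_right]⟩
  have hlt : Nat.card (E ⧸ Z) < n := by
    rw [← hn, Z.card_eq_card_quotient_mul_card_subgroup, hcard]
    exact lt_mul_of_one_lt_right Nat.card_pos (Fact.out : p.Prime).one_lt
  obtain ⟨t, ht⟩ := ih _ hlt (hE.to_quotient Z) ((QuotientGroup.mk' Z).comp r) rfl
  let ε : Multiplicative (ZMod p) ≃* (QuotientGroup.mk' Z).ker :=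
    mulEquivOfPrimeCardEq (p := p) (by simp) (by rw [QuotientGroup.ker_mk', hcard])
  refine exists_extension_of_central_ker (QuotientGroup.mk'_surjective Z)
    (by rwa [QuotientGroup.ker_mk']) ?_ (fun c => ?_) ht.symm
  · rw [QuotientGroup.ker_mk', hcard]
    exact (Nat.Prime.coprime_iff_not_dvd Fact.out).2 hp
  · obtain ⟨C, hC⟩ := hext (ε.symm.toMonoidHom.comp c)
    refine ⟨ε.toMonoidHom.comp C, MonoidHom.ext fun d => ?_⟩
    exact ε.symm_apply_eq.1 (DFunLike.congr_fun hC d).symm |>.symm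

lemma exists_hom_isPGroup_of_isNilpotent (G : Type*) [Group G] [Finite G] [Group.IsNilpotent G] :
    ∃ (P : Subgroup G) (r : G →* P), IsPGroup p P ∧ ¬ p ∣ Nat.card r.ker := by
  by_cases hdvd : p ∣ Nat.card G
  · obtain ⟨e⟩ := ((Group.isNilpotent_of_finite_tfae (G := G)).out 0 4).1 ‹_›
    let i : (Nat.card G).primeFactors :=
      ⟨p, Nat.mem_primeFactors.2 ⟨Fact.out, hdvd, Nat.card_pos.ne'⟩⟩
    let P : Sylow p G := default
    let Q (ℓ : (Nat.card G).primeFactors) := (P : Sylow ℓ G) → P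
    let r : G →* P := ((Pi.evalMonoidHom (fun P : Sylow p G => P) P).comp
      (Pi.evalMonoidHom Q i)).comp e.symm.toMonoidHom
    have hr : Function.Surjective r :=
      ((Function.surjective_eval (β := fun P : Sylow p G => P) P).comp
        (Function.surjective_eval (β := Q) i)).comp e.symm.surjective
    refine ⟨P, r, P.2, ?_⟩
    have hindex : r.ker.index = Nat.card P := by
      rw [Subgroup.index_ker, MonoidHom.range_eq_top.2 hr, Subgroup.card_top]
    have hcard : Nat.card r.ker = (P : Subgroup G).index := by
      apply Nat.eq_of_mul_eq_mul_right (Nat.card_pos (α := P))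
      rw [← hindex, r.ker.card_mul_index, hindex, mul_comm]
      exact (P : Subgroup G).card_mul_index.symm
    exact hcard ▸ P.not_dvd_index
  · exact ⟨⊥, 1, IsPGroup.of_bot, fun h => hdvd (h.trans (Subgroup.card_subgroup_dvd_card _))⟩

end PGroupQuotients

section MinimalSupplements

variable {G A : Type*} [Group G] [Group A]

lemma commutator_le_subgroupOf_commutator (D : Subgroup G) :
    commutator D ≤ (commutator G).subgroupOf D := by
  rw [Subgroup.subgroupOf, ← Subgroup.map_le_iff_le_comap, commutator_def, commutator_def,
    Subgroup.map_commutator]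
  exact Subgroup.commutator_mono le_top le_top

lemma exists_extension_of_subgroupOf_le_ker {D N : Subgroup G} [N.Normal] (hDN : D ⊔ N = ⊤)
    {f : D →* A} (hf : N.subgroupOf D ≤ f.ker) : ∃ F : G →* A, F.domRestrict D = f := by
  let π : D →* G ⧸ N := (QuotientGroup.mk' N).comp D.subtype
  have hπ : Function.Surjective π := by
    rw [← MonoidHom.range_eq_top, MonoidHom.range_comp, D.range_subtype,
      ← QuotientGroup.range_mk' N, Subgroup.map_eq_range_iff, QuotientGroup.ker_mk']
    exact codisjoint_iff.2 hDN
  have hker : π.ker ≤ f.ker := by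
    rwa [← MonoidHom.comap_ker, QuotientGroup.ker_mk']
  obtain ⟨F, hF⟩ := exists_comp_eq_of_surjective hπ hker
  exact ⟨F.comp (QuotientGroup.mk' N), hF⟩

lemma subgroupOf_le_frattini_of_minimal {D N : Subgroup G}
    (hD : Minimal (fun H : Subgroup G => H ⊔ N = ⊤) D) : N.subgroupOf D ≤ frattini D := by
  refine le_iInf₂ fun M hM => ?_
  by_contra hle
  have hsup : M ⊔ N.subgroupOf D = ⊤ := hM.2 _ (left_lt_sup.2 hle)
  have hMN : M.map D.subtype ⊔ N = ⊤ := by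
    refine top_le_iff.1 (hD.prop ▸ sup_le ?_ le_sup_right)
    calc D = (M ⊔ N.subgroupOf D).map D.subtype := by
          rw [hsup, ← MonoidHom.range_eq_map, D.range_subtype]
      _ = M.map D.subtype ⊔ N ⊓ D := by
          rw [Subgroup.map_sup, Subgroup.subgroupOf_map_subtype]
      _ ≤ M.map D.subtype ⊔ N := sup_le_sup_left inf_le_left _
  refine hM.1 (Subgroup.map_injective D.subtype_injective ?_)
  rw [← MonoidHom.range_eq_map, D.range_subtype]
  exact hD.eq_of_le hMN (Subgroup.map_subtype_le M)

lemma isNilpotent_of_commutator_le_frattini [Finite G] (h : commutator G ≤ frattini G) :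
    Group.IsNilpotent G :=
  ((Group.isNilpotent_of_finite_tfae (G := G)).out 0 2).2 fun _ hM =>
    Subgroup.Normal.of_commutator_le G (h.trans (frattini_le_coatom hM))

lemma frattini_le_ker_of_prime_card (hA : (Nat.card A).Prime) (f : G →* A) :
    frattini G ≤ f.ker := by
  have := Fact.mk hA
  obtain hbot | htop := f.range.eq_bot_or_eq_top_of_prime_card
  · simp [f.range_eq_bot_iff.1 hbot]
  · have := isCyclic_of_prime_card (α := A) rfl
    let _ := IsCyclic.commGroup (α := A)
    have := isSimpleGroup_of_prime_card (α := A) rfl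
    exact frattini_le_coatom
      (Subgroup.isCoatom_comap_of_surjective (MonoidHom.range_eq_top.1 htop) isCoatom_bot)

end MinimalSupplements

section NormalComplement

lemma card_ker_dvd_card_ker_domRestrict_mul_index {G E : Type*} [Group G] [Finite G] [Group E]
    (s : G →* E) (D : Subgroup G) :
    Nat.card s.ker ∣ Nat.card (s.domRestrict D).ker * D.index := by
  obtain ⟨k, hk⟩ : Nat.card (s.domRestrict D).range ∣ Nat.card s.range :=
    Subgroup.card_dvd_of_le (by rintro _ ⟨d, rfl⟩; exact ⟨d, rfl⟩)
  have : Finite (s.domRestrict D).range := Set.finite_range _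
  refine ⟨k, Nat.eq_of_mul_eq_mul_right (Nat.card_pos (α := (s.domRestrict D).range)) ?_⟩
  calc Nat.card (s.domRestrict D).ker * D.index * Nat.card (s.domRestrict D).range
      = Nat.card D * D.index := by
        rw [mul_right_comm, ← Subgroup.index_ker, Subgroup.card_mul_index]
    _ = Nat.card s.ker * Nat.card s.range := by
        rw [D.card_mul_index, ← Subgroup.index_ker, Subgroup.card_mul_index]
    _ = Nat.card s.ker * k * Nat.card (s.domRestrict D).range := by
        rw [hk, mul_assoc, mul_comm k]

theorem hasNormalPComplement_of_not_dvd_index {G : Type} [Group G] [Finite G] {p : ℕ}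
    (hp : p.Prime) (h : ∀ D : Subgroup G, D ⊔ commutator G = ⊤ → ¬ p ∣ D.index) :
    HasNormalPComplement p G := by
  have := Fact.mk hp
  obtain ⟨D, hD⟩ := (Set.toFinite {D : Subgroup G | D ⊔ commutator G = ⊤}).exists_minimal
    ⟨⊤, top_sup_eq _⟩
  have hfrattini : (commutator G).subgroupOf D ≤ frattini D := subgroupOf_le_frattini_of_minimal hD
  have := isNilpotent_of_commutator_le_frattini
    ((commutator_le_subgroupOf_commutator D).trans hfrattini)
  obtain ⟨P, r, hP, hr⟩ := exists_hom_isPGroup_of_isNilpotent (p := p) D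
  obtain ⟨s, rfl⟩ := exists_extension_of_isPGroup (h D hD.prop)
    (fun c => exists_extension_of_subgroupOf_le_ker hD.prop
      (hfrattini.trans (frattini_le_ker_of_prime_card (by simpa using hp) c))) hP r
  refine ⟨s.ker, inferInstance, ((hp.coprime_iff_not_dvd).2 fun hdvd => ?_).symm, ?_⟩
  · exact (hp.dvd_mul.1 (hdvd.trans (card_ker_dvd_card_ker_domRestrict_mul_index s D))).elim hr
      (h D hD.prop)
  · rw [Subgroup.index_ker]
    exact IsPGroup.iff_card.1 (hP.to_subgroup s.range)

end NormalComplement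

section Subrepresentations

open Representation

variable {k G V : Type*} [Field k] [Monoid G] [AddCommGroup V] [Module k V]
  {ρ : Representation k G V}

lemma isCompl_toSubmodule {U W : Subrepresentation ρ} (h : IsCompl U W) :
    IsCompl U.toSubmodule W.toSubmodule :=
  .of_eq (congrArg Subrepresentation.toSubmodule h.inf_eq_bot)
    (congrArg Subrepresentation.toSubmodule h.sup_eq_top)

lemma character_eq_add_of_isCompl [Module.Finite k V] {U W : Subrepresentation ρ}
    (h : IsCompl U W) :
    ρ.character = U.toRepresentation.character + W.toRepresentation.character := by
  ext g
  let N (b : Bool) : Submodule k V := cond b U.toSubmodule W.toSubmodule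
  have hN : DirectSum.IsInternal N :=
    (DirectSum.isInternal_submodule_iff_isCompl N (i := true) (j := false) (by simp)
      (by ext b; cases b <;> simp)).2 (isCompl_toSubmodule h)
  have hmaps : ∀ b, Set.MapsTo (ρ g) (N b) (N b)
    | true => U.apply_mem_toSubmodule g
    | false => W.apply_mem_toSubmodule g
  have htrace := LinearMap.trace_eq_sum_trace_restrict hN hmaps
  rwa [Fintype.sum_bool] at htrace

lemma exists_isCompl_of_not_isIrreducible [Nontrivial V] [hρ : ρ.IsSemisimpleRepresentation]
    (h : ¬ ρ.IsIrreducible) : ∃ U W : Subrepresentation ρ, IsCompl U W ∧ U ≠ ⊥ ∧ W ≠ ⊥ := by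
  have : Nontrivial (Subrepresentation ρ) :=
    ⟨⊥, ⊤, fun h => bot_ne_top (congrArg Subrepresentation.toSubmodule h)⟩
  obtain ⟨U, hbot, htop⟩ : ∃ U : Subrepresentation ρ, U ≠ ⊥ ∧ U ≠ ⊤ := by
    by_contra! hsimple
    exact h ⟨fun U => or_iff_not_imp_left.2 (hsimple U)⟩
  obtain ⟨W, hW⟩ := hρ.exists_isCompl U
  exact ⟨U, W, hW, hbot, fun hWbot => htop (by simpa [hWbot] using hW.sup_eq_top)⟩

end Subrepresentations

section IrreducibleCharacters

open Representation

variable {G : Type} [Group G]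

/-- The scalar product of class functions of a finite group against `χ`, as a linear form. No
complex conjugation is needed, since the conjugate of a character takes the value `χ g⁻¹` at `g`. -/
noncomputable def charInner (χ : G → ℂ) : Module.Dual ℂ (G → ℂ) :=
  (Nat.card G : ℂ)⁻¹ • ∑ᶠ g, χ g⁻¹ • LinearMap.proj g

lemma charInner_apply [Fintype G] (χ f : G → ℂ) :
    charInner χ f = (Nat.card G : ℂ)⁻¹ * ∑ g, χ g⁻¹ * f g := by
  simp [charInner, finsum_eq_sum_of_fintype]

lemma charInner_self_eq_one_iff [Fintype G] {χ : G → ℂ} :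
    charInner χ χ = 1 ↔ ∑ g, χ g * χ g⁻¹ = Nat.card G := by
  simp only [charInner_apply, mul_comm (χ _⁻¹)]
  rw [inv_mul_eq_one₀ (NeZero.ne _), eq_comm]

variable [Finite G]

lemma charInner_self {χ : G → ℂ} (hχ : χ ∈ Irr G) : charInner χ χ = 1 := by
  have := Fintype.ofFinite G
  obtain ⟨V, hV, rfl⟩ := hχ
  exact charInner_self_eq_one_iff.2 (V.simple_iff_char_is_norm_one.1 hV)

lemma charInner_eq_zero_of_ne {χ ψ : G → ℂ} (hχ : χ ∈ Irr G) (hψ : ψ ∈ Irr G) (h : χ ≠ ψ) :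
    charInner χ ψ = 0 := by
  have := Fintype.ofFinite G
  obtain ⟨V, hV, rfl⟩ := hχ
  obtain ⟨W, hW, rfl⟩ := hψ
  let _ := invertibleOfNonzero (NeZero.ne (Nat.card G : ℂ))
  simp only [charInner_apply, mul_comm (V.character _⁻¹)]
  rw [FDRep.char_orthonormal W V, if_neg]
  exact fun ⟨i⟩ => h (FDRep.char_iso i).symm

lemma charInner_eq_ite [DecidableEq (G → ℂ)] {χ ψ : G → ℂ} (hχ : χ ∈ Irr G) (hψ : ψ ∈ Irr G) :
    charInner χ ψ = if χ = ψ then 1 else 0 := by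
  split_ifs with h
  · exact h ▸ charInner_self hχ
  · exact charInner_eq_zero_of_ne hχ hψ h

lemma finite_irr (G : Type) [Group G] [Finite G] : (Irr G).Finite :=
  (LinearIndependent.of_pairwise_dual_eq_zero_one (Subtype.val : Irr G → G → ℂ)
    (fun χ => charInner χ.1)
    (fun χ ψ h => charInner_eq_zero_of_ne χ.2 ψ.2 (Subtype.coe_ne_coe.2 h))
    fun χ => charInner_self χ.2).setFinite

/-- The irreducible characters of `G` as a finset, for use in sums. -/
noncomputable def irrFinset (G : Type) [Group G] [Finite G] : Finset (G → ℂ) :=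
  (finite_irr G).toFinset

@[simp]
lemma mem_irrFinset {χ : G → ℂ} : χ ∈ irrFinset G ↔ χ ∈ Irr G :=
  (finite_irr G).mem_toFinset

variable {V : Type} [AddCommGroup V] [Module ℂ V] [Module.Finite ℂ V] {ρ : Representation ℂ G V}

lemma character_mem_irr (h : charInner ρ.character ρ.character = 1) : ρ.character ∈ Irr G :=
  have := Fintype.ofFinite G
  ⟨FDRep.of ρ, (FDRep.of ρ).simple_iff_char_is_norm_one.2 (charInner_self_eq_one_iff.1 h), rfl⟩

lemma character_mem_irr_of_isIrreducible [ρ.IsIrreducible] : ρ.character ∈ Irr G := by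
  have := Fintype.ofFinite G
  let _ := invertibleOfNonzero (NeZero.ne (Nat.card G : ℂ))
  refine character_mem_irr ?_
  simp only [charInner_apply, mul_comm (ρ.character _⁻¹)]
  rw [char_orthonormal ρ ρ, if_pos ⟨.refl ρ⟩]

lemma one_mem_irr : (1 : G → ℂ) ∈ Irr G := by
  have := Fintype.ofFinite G
  have h : (trivial ℂ G ℂ).character = 1 := by
    ext g
    simp [character]
  exact h ▸ character_mem_irr (by simp [h, charInner_apply])

theorem character_mem_closure_irr (ρ : Representation ℂ G V) :
    ρ.character ∈ AddSubmonoid.closure (Irr G) := by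
  induction hn : Module.finrank ℂ V using Nat.strong_induction_on generalizing V with
  | _ n ih =>
  by_cases hirr : ρ.IsIrreducible
  · exact AddSubmonoid.subset_closure character_mem_irr_of_isIrreducible
  cases subsingleton_or_nontrivial V
  · have hzero : ρ.character = 0 := by
      ext g
      simp [character, Subsingleton.elim (ρ g) 0]
    exact hzero ▸ zero_mem _
  obtain ⟨U, W, hUW, hU, hW⟩ := exists_isCompl_of_not_isIrreducible hirr
  have hpos {U : Subrepresentation ρ} (hU : U ≠ ⊥) : 0 < Module.finrank ℂ U.toSubmodule :=
    Nat.pos_of_ne_zero fun h =>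
      hU (Subrepresentation.toSubmodule_injective (Submodule.finrank_eq_zero.1 h))
  have hsum := Submodule.finrank_add_eq_of_isCompl (isCompl_toSubmodule hUW)
  have hUpos := hpos hU
  have hWpos := hpos hW
  rw [character_eq_add_of_isCompl hUW]
  exact add_mem (ih _ (by omega) _ rfl) (ih _ (by omega) _ rfl)

lemma sum_charInner_smul {f : G → ℂ} (hf : f ∈ AddSubmonoid.closure (Irr G)) :
    ∑ χ ∈ irrFinset G, charInner χ f • χ = f := by
  classical
  induction hf using AddSubmonoid.closure_induction with
  | mem ψ hψ =>
    rw [Finset.sum_congr rfl fun χ hχ => by rw [charInner_eq_ite (mem_irrFinset.1 hχ) hψ]]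
    simp [hψ]
  | zero => simp
  | add f g _ _ hf hg => simp only [map_add, add_smul, Finset.sum_add_distrib, hf, hg]

/-- The multiplicity of the irreducible character `χ` in the character `f`, as a natural number
(junk if `f` is not a character). -/
noncomputable def mult (χ f : G → ℂ) : ℕ := ⌊(charInner χ f).re⌋₊

lemma natCast_mult {χ f : G → ℂ} (hχ : χ ∈ Irr G) (hf : f ∈ AddSubmonoid.closure (Irr G)) :
    (mult χ f : ℂ) = charInner χ f := by
  classical
  obtain ⟨n, hn⟩ : ∃ n : ℕ, charInner χ f = n := by
    induction hf using AddSubmonoid.closure_induction with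
    | mem ψ hψ => exact ⟨if χ = ψ then 1 else 0, by simp [charInner_eq_ite hχ hψ]⟩
    | zero => exact ⟨0, by simp⟩
    | add f g _ _ hf hg =>
      obtain ⟨m, hm⟩ := hf
      obtain ⟨n, hn⟩ := hg
      exact ⟨m + n, by simp [hm, hn]⟩
  simp [mult, hn]

end IrreducibleCharacters

section Degrees

open Representation

variable {G : Type} [Group G]

lemma irr_apply_one {χ : G → ℂ} (hχ : χ ∈ Irr G) : χ 1 = charDeg χ := by
  obtain ⟨V, -, rfl⟩ := hχ
  simp [charDeg, FDRep.char_one]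

variable [Finite G]

lemma charDeg_pos {χ : G → ℂ} (hχ : χ ∈ Irr G) : 0 < charDeg χ := by
  have hone := irr_apply_one hχ
  have hself := charInner_self hχ
  obtain ⟨V, -, rfl⟩ := hχ
  refine Nat.pos_of_ne_zero fun hdeg => ?_
  rw [FDRep.char_one, hdeg, Nat.cast_inj] at hone
  have : Subsingleton V := Module.finrank_zero_iff.1 hone
  have hzero : V.character = 0 := by
    ext g
    simp [FDRep.character, Subsingleton.elim (V.ρ g) 0]
  simp [hzero] at hself

lemma character_leftRegular [DecidableEq G] :
    (leftRegular ℂ G).character = Pi.single 1 (Nat.card G : ℂ) := by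
  have := Fintype.ofFinite G
  ext g
  rw [character, LinearMap.trace_eq_matrix_trace ℂ (.ofRepr (MonoidAlgebra.coeffLinearEquiv ℂ))]
  by_cases h : g = 1 <;> simp [Matrix.trace, LinearMap.toMatrix_apply, h]

theorem sum_apply_one_smul_irr [DecidableEq G] :
    ∑ χ ∈ irrFinset G, χ 1 • χ = Pi.single 1 (Nat.card G : ℂ) := by
  have := Fintype.ofFinite G
  rw [← character_leftRegular, ← sum_charInner_smul (character_mem_closure_irr _)]
  refine Finset.sum_congr rfl fun χ _ => ?_
  rw [character_leftRegular, charInner_apply, Finset.sum_eq_single 1 (by simp +contextual)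
    (by simp)]
  simp [mul_comm (χ 1)]

lemma sum_mult_mul_charDeg {f : G → ℂ} (hf : f ∈ AddSubmonoid.closure (Irr G)) :
    ((∑ χ ∈ irrFinset G, mult χ f * charDeg χ : ℕ) : ℂ) = f 1 := by
  conv_rhs => rw [← sum_charInner_smul hf]
  push_cast
  rw [Finset.sum_apply]
  refine Finset.sum_congr rfl fun χ hχ => ?_
  rw [mem_irrFinset] at hχ
  rw [natCast_mult hχ hf, ← irr_apply_one hχ, Pi.smul_apply, smul_eq_mul]

end Degrees

section Restriction

variable {G : Type} [Group G]

lemma comp_mem_closure_irr {H : Type} [Group H] [Finite H] {χ : G → ℂ} (hχ : χ ∈ Irr G)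
    (φ : H →* G) : χ ∘ φ ∈ AddSubmonoid.closure (Irr H) := by
  obtain ⟨V, -, rfl⟩ := hχ
  exact character_mem_closure_irr (V.ρ.comp φ : Representation ℂ H V)

/-- The multiplicity of `χ` in the permutation character of `G` on the cosets of `D`, encoded
through Frobenius reciprocity as the multiplicity of the trivial character in `χ` restricted to
`D`. -/
noncomputable def permMult (D : Subgroup G) (χ : G → ℂ) : ℕ :=
  mult 1 (χ ∘ D.subtype)

lemma natCast_permMult {D : Subgroup G} [Finite D] {χ : G → ℂ} (hχ : χ ∈ Irr G) :
    (permMult D χ : ℂ) = charInner 1 (χ ∘ D.subtype) :=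
  natCast_mult one_mem_irr (comp_mem_closure_irr hχ D.subtype)

theorem sum_charDeg_mul_permMult [Finite G] (D : Subgroup G) :
    ∑ χ ∈ irrFinset G, charDeg χ * permMult D χ = D.index := by
  classical
  have := Fintype.ofFinite D
  let L : (G → ℂ) →ₗ[ℂ] ℂ := charInner 1 ∘ₗ LinearMap.funLeft ℂ ℂ D.subtype
  have hL : L (∑ χ ∈ irrFinset G, χ 1 • χ) = D.index := by
    rw [sum_apply_one_smul_irr]
    change charInner 1 (Pi.single 1 (Nat.card G : ℂ) ∘ D.subtype) = _
    rw [charInner_apply, ← D.card_mul_index]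
    simp [Pi.single_apply]
  rw [map_sum] at hL
  rw [← Nat.cast_inj (R := ℂ), ← hL]
  push_cast
  refine Finset.sum_congr rfl fun χ hχ => ?_
  rw [mem_irrFinset] at hχ
  rw [natCast_permMult hχ, ← irr_apply_one hχ, map_smul, smul_eq_mul]
  rfl

end Restriction

section LinearCharacters

variable {G : Type} [Group G]

/-- The linear character of `G` given by a homomorphism to `ℂˣ`, as a function `G → ℂ`. -/
def linChar : (G →* ℂˣ) →* (G → ℂ) where
  toFun l g := l g
  map_one' := rfl
  map_mul' _ _ := rfl

@[simp]
lemma linChar_apply (l : G →* ℂˣ) (g : G) : linChar l g = l g :=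
  rfl

lemma linChar_injective : Function.Injective (linChar : (G →* ℂˣ) → G → ℂ) :=
  fun _ _ h => MonoidHom.ext fun g => Units.ext (congrFun h g)

@[simp]
lemma linChar_inv_mul_cancel_left (l : G →* ℂˣ) (f : G → ℂ) : linChar l⁻¹ * (linChar l * f) = f :=
  funext fun g => (l g).inv_mul_cancel_left (f g)

@[simp]
lemma linChar_mul_inv_cancel_left (l : G →* ℂˣ) (f : G → ℂ) : linChar l * (linChar l⁻¹ * f) = f :=
  funext fun g => (l g).mul_inv_cancel_left (f g)

@[simp]
lemma charDeg_linChar_mul (l : G →* ℂˣ) (χ : G → ℂ) : charDeg (linChar l * χ) = charDeg χ := by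
  simp [charDeg]

lemma charDeg_linChar (l : G →* ℂˣ) : charDeg (linChar l) = 1 := by
  simp [charDeg]

lemma exists_linChar_eq {χ : G → ℂ} (hχ : χ ∈ Irr G) (h : charDeg χ = 1) :
    ∃ l : G →* ℂˣ, linChar l = χ := by
  have hone := irr_apply_one hχ
  obtain ⟨V, -, rfl⟩ := hχ
  rw [h, FDRep.char_one, Nat.cast_inj] at hone
  refine ⟨(LinearMap.det.comp V.ρ).toHomUnits, funext fun g => ?_⟩
  obtain ⟨c, hc, -⟩ := LinearMap.existsUnique_eq_smul_id_of_finrank_eq_one hone (V.ρ g)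
  simp [FDRep.character, hc, hone]

lemma exists_character_eq_linChar_mul {χ : G → ℂ} (hχ : χ ∈ Irr G) (l : G →* ℂˣ) :
    ∃ V : FDRep ℂ G, V.character = linChar l * χ := by
  obtain ⟨V, -, rfl⟩ := hχ
  let σ : Representation ℂ G ℂ :=
    (Algebra.lmul ℂ ℂ).toMonoidHom.comp ((Units.coeHom ℂ).comp l)
  have hσ : σ.character = linChar l := by
    ext g
    exact Algebra.trace_self_apply _
  exact ⟨FDRep.of (σ.tprod V.ρ), by rw [← hσ]; exact Representation.char_tensor σ V.ρ⟩

lemma sum_linChar_mul {M : Type*} [AddCommMonoid M] {S : Finset (G → ℂ)}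
    (hS : ∀ (l : G →* ℂˣ), ∀ χ ∈ S, linChar l * χ ∈ S) (l : G →* ℂˣ) (F : (G → ℂ) → M) :
    ∑ χ ∈ S, F (linChar l * χ) = ∑ χ ∈ S, F χ :=
  Finset.sum_nbij' (linChar l * ·) (linChar l⁻¹ * ·) (hS l) (hS l⁻¹) (by simp)
    (by simp) fun _ _ => rfl

variable [Finite G]

lemma charInner_linChar_mul (l : G →* ℂˣ) (χ f : G → ℂ) :
    charInner χ (linChar l * f) = charInner (linChar l⁻¹ * χ) f := by
  have := Fintype.ofFinite G
  simp only [charInner_apply, Pi.mul_apply, linChar_apply, MonoidHom.inv_apply, map_inv, inv_inv]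
  congr! 2 with g
  ring

theorem linChar_mul_mem_irr {χ : G → ℂ} (hχ : χ ∈ Irr G) (l : G →* ℂˣ) :
    linChar l * χ ∈ Irr G := by
  obtain ⟨V, hV⟩ := exists_character_eq_linChar_mul hχ l
  rw [← hV]
  refine character_mem_irr (ρ := V.ρ) ?_
  change charInner V.character V.character = 1
  rw [hV, charInner_linChar_mul, linChar_inv_mul_cancel_left, charInner_self hχ]

lemma linChar_mem_irr (l : G →* ℂˣ) : linChar l ∈ Irr G :=
  mul_one (linChar l) ▸ linChar_mul_mem_irr one_mem_irr l

instance finite_linearCharacters : Finite (G →* ℂˣ) :=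
  have := (finite_irr G).to_subtype
  .of_injective (fun l => (⟨linChar l, linChar_mem_irr l⟩ : Irr G)) fun _ _ h =>
    linChar_injective (congrArg Subtype.val h)

lemma sum_filter_charDeg_eq_one [Fintype (G →* ℂˣ)] {M : Type*} [AddCommMonoid M]
    (F : (G → ℂ) → M) :
    ∑ χ ∈ irrFinset G with charDeg χ = 1, F χ = ∑ l : G →* ℂˣ, F (linChar l) := by
  refine (Finset.sum_bij (fun l _ => linChar l) (fun l _ => ?_)
    (fun _ _ _ _ h => linChar_injective h) (fun χ hχ => ?_) fun _ _ => rfl).symm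
  · simp [linChar_mem_irr, charDeg_linChar]
  · rw [Finset.mem_filter, mem_irrFinset] at hχ
    obtain ⟨l, rfl⟩ := exists_linChar_eq hχ.1 hχ.2
    exact ⟨l, Finset.mem_univ l, rfl⟩

end LinearCharacters

section Supplements

variable {G : Type} [Group G] {D : Subgroup G}

lemma domRestrict_injective_of_sup_commutator_eq_top {A : Type*} [CommGroup A]
    (hD : D ⊔ commutator G = ⊤) :
    Function.Injective fun l : G →* A => l.domRestrict D := by
  intro l l' h
  have hle : D ⊔ commutator G ≤ (l / l').ker := by
    refine sup_le (fun d hd => ?_) (Abelianization.commutator_subset_ker _)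
    rw [MonoidHom.mem_ker, MonoidHom.div_apply, div_eq_one]
    exact DFunLike.congr_fun h ⟨d, hd⟩
  refine MonoidHom.ext fun g => div_eq_one.1 ?_
  exact (l / l').mem_ker.1 (hle (hD ▸ Subgroup.mem_top g))

variable [Finite G] [Fintype (G →* ℂˣ)]

lemma sum_permMult_linChar (hD : D ⊔ commutator G = ⊤) :
    ∑ l : G →* ℂˣ, permMult D (linChar l) = 1 := by
  classical
  have hmult (l : G →* ℂˣ) : permMult D (linChar l) = if l = 1 then 1 else 0 := by
    have hiff : (1 : D → ℂ) = linChar (l.domRestrict D) ↔ l = 1 := by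
      rw [← map_one linChar, linChar_injective.eq_iff, eq_comm]
      exact (domRestrict_injective_of_sup_commutator_eq_top hD).eq_iff (b := 1)
    rw [← Nat.cast_inj (R := ℂ), natCast_permMult (linChar_mem_irr l),
      show linChar l ∘ D.subtype = linChar (l.domRestrict D) from rfl,
      charInner_eq_ite one_mem_irr (linChar_mem_irr _)]
    simp [hiff]
  simp [hmult]

lemma sum_permMult_linChar_mul_le (hD : D ⊔ commutator G = ⊤) {χ : G → ℂ} (hχ : χ ∈ Irr G) :
    ∑ l : G →* ℂˣ, permMult D (linChar l * χ) ≤ charDeg χ := by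
  have hres := comp_mem_closure_irr hχ D.subtype
  let ψ (l : G →* ℂˣ) : D → ℂ := linChar (l⁻¹.domRestrict D)
  have hψ : Function.Injective ψ := fun _ _ h =>
    inv_injective (domRestrict_injective_of_sup_commutator_eq_top hD (linChar_injective h))
  have hmult (l : G →* ℂˣ) : permMult D (linChar l * χ) = mult (ψ l) (χ ∘ D.subtype) := by
    rw [← Nat.cast_inj (R := ℂ), natCast_permMult (linChar_mul_mem_irr hχ l),
      natCast_mult (linChar_mem_irr _) hres]
    change charInner 1 (linChar (l.domRestrict D) * (χ ∘ D.subtype)) = _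
    rw [charInner_linChar_mul, mul_one]
    rfl
  calc ∑ l : G →* ℂˣ, permMult D (linChar l * χ)
      = ∑ ξ ∈ Finset.univ.map ⟨ψ, hψ⟩, mult ξ (χ ∘ D.subtype) * charDeg ξ := by
        rw [Finset.sum_map]
        refine Finset.sum_congr rfl fun l _ => ?_
        simp [hmult, ψ, charDeg_linChar]
    _ ≤ ∑ ξ ∈ irrFinset D, mult ξ (χ ∘ D.subtype) * charDeg ξ :=
        Finset.sum_le_sum_of_subset fun ξ hξ => by
          obtain ⟨l, -, rfl⟩ := Finset.mem_map.1 hξ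
          exact mem_irrFinset.2 (linChar_mem_irr _)
    _ = charDeg χ := by
        rw [← Nat.cast_inj (R := ℂ), sum_mult_mul_charDeg hres, ← irr_apply_one hχ]
        simp

end Supplements

section Weights

lemma le_sum_min_mul {ι : Type*} {s : Finset ι} {k m : ι → ℕ} {c : ℕ}
    (h : c ≤ ∑ i ∈ s, k i * m i) : c ≤ ∑ i ∈ s, min (k i) c * m i := by
  by_cases hlarge : ∃ i ∈ s, c < k i ∧ m i ≠ 0
  · obtain ⟨i, hi, hci, hmi⟩ := hlarge
    calc c ≤ min (k i) c * m i := by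
          rw [min_eq_right hci.le]
          exact Nat.le_mul_of_pos_right c (Nat.pos_of_ne_zero hmi)
      _ ≤ ∑ i ∈ s, min (k i) c * m i :=
          Finset.single_le_sum (f := fun i => min (k i) c * m i) (fun _ _ => Nat.zero_le _) hi
  · push Not at hlarge
    refine h.trans_eq (Finset.sum_congr rfl fun i hi => ?_)
    obtain hle | hlt := le_or_gt (k i) c
    · rw [min_eq_left hle]
    · rw [hlarge i hi hlt, mul_zero, mul_zero]

lemma min_mul_self_add_le {k : ℕ} (hk : 2 ≤ k) (c : ℕ) :
    min k c * k + 2 * (c + 2) ≤ (c + 4) * k := by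
  obtain hle | hlt := le_or_gt k c
  · -- the difference of the two sides is `(k - 2) * (c + 2 - k)`
    rw [min_eq_left hle]
    obtain ⟨a, rfl⟩ := Nat.exists_eq_add_of_le hk
    obtain ⟨b, rfl⟩ := Nat.exists_eq_add_of_le hle
    nlinarith
  · rw [min_eq_right hlt.le]
    linarith

end Weights

section AverageDegree

variable {G : Type} [Group G]

lemma acd_coe {S : Finset (G → ℂ)} (hS : ∀ χ ∈ S, χ ∈ Irr G) :
    acd (S : Set (G → ℂ)) = (∑ χ ∈ S, charDeg χ : ℕ) / (S.card : ℝ) := by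
  have hre : ∑ χ ∈ S, (χ 1).re = ∑ χ ∈ S, (charDeg χ : ℝ) :=
    Finset.sum_congr rfl fun χ hχ => by rw [irr_apply_one (hS χ hχ), Complex.natCast_re]
  rw [acd, finsum_mem_coe_finset, Set.ncard_coe_finset, hre, Nat.cast_sum]

variable [Finite G] {p : ℕ}

/-- The nonlinear irreducible characters of degree prime to `p`. -/
noncomputable def nonlinearPPrimeIrr (p : ℕ) (G : Type) [Group G] [Finite G] : Finset (G → ℂ) :=
  {χ ∈ irrFinset G | ¬ p ∣ charDeg χ ∧ charDeg χ ≠ 1}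

lemma mem_nonlinearPPrimeIrr {χ : G → ℂ} :
    χ ∈ nonlinearPPrimeIrr p G ↔ χ ∈ Irr G ∧ ¬ p ∣ charDeg χ ∧ charDeg χ ≠ 1 := by
  simp [nonlinearPPrimeIrr]

lemma linChar_mul_mem_nonlinearPPrimeIrr (l : G →* ℂˣ) (χ : G → ℂ)
    (hχ : χ ∈ nonlinearPPrimeIrr p G) : linChar l * χ ∈ nonlinearPPrimeIrr p G := by
  rw [mem_nonlinearPPrimeIrr, charDeg_linChar_mul] at *
  exact ⟨linChar_mul_mem_irr hχ.1 l, hχ.2⟩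

lemma two_le_charDeg_of_mem_nonlinearPPrimeIrr {χ : G → ℂ} (hχ : χ ∈ nonlinearPPrimeIrr p G) :
    2 ≤ charDeg χ := by
  obtain ⟨hirr, -, hne⟩ := mem_nonlinearPPrimeIrr.1 hχ
  have hpos := charDeg_pos hirr
  omega

lemma sum_pPrimeIrr [Fintype (G →* ℂˣ)] (hp : p ≠ 1) {M : Type*} [AddCommMonoid M]
    (F : (G → ℂ) → M) :
    ∑ χ ∈ irrFinset G with ¬ p ∣ charDeg χ, F χ =
      ∑ l : G →* ℂˣ, F (linChar l) + ∑ χ ∈ nonlinearPPrimeIrr p G, F χ := by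
  rw [← Finset.sum_filter_add_sum_filter_not _ (charDeg · = 1), Finset.filter_filter,
    Finset.filter_filter, ← sum_filter_charDeg_eq_one]
  congr! 3 with χ
  exact and_iff_right_of_imp fun h => by rwa [h, Nat.dvd_one]

lemma acd_pPrimeIrr [Fintype (G →* ℂˣ)] (hp : p ≠ 1) :
    acd {χ ∈ Irr G | ¬ p ∣ charDeg χ} =
      ((Fintype.card (G →* ℂˣ) + ∑ χ ∈ nonlinearPPrimeIrr p G, charDeg χ : ℕ) : ℝ) /
        ((Fintype.card (G →* ℂˣ) + (nonlinearPPrimeIrr p G).card : ℕ) : ℝ) := by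
  have hcoe : {χ ∈ Irr G | ¬ p ∣ charDeg χ} =
      ↑({χ ∈ irrFinset G | ¬ p ∣ charDeg χ} : Finset (G → ℂ)) := by
    ext χ
    simp
  rw [hcoe, acd_coe fun χ hχ => mem_irrFinset.1 (Finset.mem_filter.1 hχ).1,
    Finset.card_eq_sum_ones, sum_pPrimeIrr hp, sum_pPrimeIrr hp]
  simp [charDeg_linChar]

variable {D : Subgroup G}

lemma dvd_one_add_sum_nonlinearPPrimeIrr (hD : D ⊔ commutator G = ⊤) (hp : p ≠ 1)
    (hdvd : p ∣ D.index) : p ∣ 1 + ∑ χ ∈ nonlinearPPrimeIrr p G, charDeg χ * permMult D χ := by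
  have := Fintype.ofFinite (G →* ℂˣ)
  rw [← sum_charDeg_mul_permMult, ← Finset.sum_filter_add_sum_filter_not _ (p ∣ charDeg ·),
    sum_pPrimeIrr hp] at hdvd
  simp only [charDeg_linChar, one_mul, sum_permMult_linChar hD] at hdvd
  refine (Nat.dvd_add_right (Finset.dvd_sum fun χ hχ => ?_)).1 hdvd
  exact (Finset.mem_filter.1 hχ).2.mul_right _

lemma pred_le_sum_min_mul_permMult (hD : D ⊔ commutator G = ⊤) (hp : p ≠ 1)
    (hdvd : p ∣ D.index) :
    p - 1 ≤ ∑ χ ∈ nonlinearPPrimeIrr p G, min (charDeg χ) (p - 1) * permMult D χ := by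
  have hle := Nat.le_of_dvd (by omega) (dvd_one_add_sum_nonlinearPPrimeIrr hD hp hdvd)
  exact le_sum_min_mul (by omega)

theorem card_mul_pred_le_sum [Fintype (G →* ℂˣ)] (hD : D ⊔ commutator G = ⊤) (hp : p ≠ 1)
    (hdvd : p ∣ D.index) :
    Fintype.card (G →* ℂˣ) * (p - 1) ≤
      ∑ χ ∈ nonlinearPPrimeIrr p G, min (charDeg χ) (p - 1) * charDeg χ := by
  let w (χ : G → ℂ) : ℕ := min (charDeg χ) (p - 1)
  have hw (l : G →* ℂˣ) (χ : G → ℂ) : w (linChar l * χ) = w χ := by simp [w]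
  calc Fintype.card (G →* ℂˣ) * (p - 1)
      ≤ ∑ _l : G →* ℂˣ, ∑ χ ∈ nonlinearPPrimeIrr p G, w χ * permMult D χ := by
        rw [Finset.sum_const, Finset.card_univ, smul_eq_mul]
        exact Nat.mul_le_mul_left _ (pred_le_sum_min_mul_permMult hD hp hdvd)
    _ = ∑ l : G →* ℂˣ, ∑ χ ∈ nonlinearPPrimeIrr p G, w χ * permMult D (linChar l * χ) := by
        refine Finset.sum_congr rfl fun l _ => ?_
        rw [← sum_linChar_mul linChar_mul_mem_nonlinearPPrimeIrr l]
        simp only [hw]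
    _ = ∑ χ ∈ nonlinearPPrimeIrr p G, w χ * ∑ l : G →* ℂˣ, permMult D (linChar l * χ) := by
        rw [Finset.sum_comm]
        simp only [Finset.mul_sum]
    _ ≤ ∑ χ ∈ nonlinearPPrimeIrr p G, w χ * charDeg χ := Finset.sum_le_sum fun χ hχ =>
        Nat.mul_le_mul_left _ (sum_permMult_linChar_mul_le hD (mem_nonlinearPPrimeIrr.1 hχ).1)

theorem le_acd_of_dvd_index (hp : 1 < p) (hD : D ⊔ commutator G = ⊤) (hdvd : p ∣ D.index) :
    2 * ((p : ℝ) + 1) / ((p : ℝ) + 3) ≤ acd {χ ∈ Irr G | ¬ p ∣ charDeg χ} := by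
  have := Fintype.ofFinite (G →* ℂˣ)
  obtain ⟨c, rfl⟩ := Nat.exists_eq_succ_of_ne_zero (Nat.ne_zero_of_lt hp)
  let N := Fintype.card (G →* ℂˣ)
  let X := nonlinearPPrimeIrr (c + 1) G
  have hN : 0 < N := Fintype.card_pos
  have hweights : N * c + 2 * (c + 2) * X.card ≤ (c + 4) * ∑ χ ∈ X, charDeg χ :=
    calc N * c + 2 * (c + 2) * X.card
        ≤ ∑ χ ∈ X, (min (charDeg χ) c * charDeg χ + 2 * (c + 2)) := by
          rw [Finset.sum_add_distrib, Finset.sum_const, smul_eq_mul, mul_comm X.card]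
          exact Nat.add_le_add_right (card_mul_pred_le_sum hD hp.ne' hdvd) _
      _ ≤ (c + 4) * ∑ χ ∈ X, charDeg χ := by
          rw [Finset.mul_sum]
          exact Finset.sum_le_sum fun χ hχ =>
            min_mul_self_add_le (two_le_charDeg_of_mem_nonlinearPPrimeIrr hχ) c
  have hcross : 2 * (c + 1 + 1) * (N + X.card) ≤ (N + ∑ χ ∈ X, charDeg χ) * (c + 1 + 3) := by
    linarith
  rw [acd_pPrimeIrr hp.ne', div_le_div_iff₀ (by positivity) (by positivity)]
  exact_mod_cast hcross

end AverageDegree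

theorem avg_pprime_char_degrees_lt_implies_pNilpotent
    (G : Type) [Group G] [Fintype G] (p : ℕ) (hp : p.Prime)
    (h : acd {f ∈ Irr G | ¬ p ∣ charDeg f} < 2 * ((p : ℝ) + 1) / ((p : ℝ) + 3)) :
    HasNormalPComplement p G :=
  hasNormalPComplement_of_not_dvd_index hp fun _ hD hdvd =>
    (le_acd_of_dvd_index hp.one_lt hD hdvd).not_gt h
end

section
/- Let G be a finite group of odd order and let p be an odd prime with p ≠ 7. If the average of the degrees of the irreducible complex characters of G whose degrees are not divisible by p is strictly less than 2, then G has a normal p-complement. -/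
open scoped BigOperators

/-!
By Tate's theorem it is enough to extend every linear character of a Sylow `p`-subgroup `P` to `G`.
Let `A` be the group of linear characters of `P` modulo those that extend, with its action of
`N_G(P)`. By coprimality a class `a` is represented by a linear character that extends to the
inertia subgroup of `a`; some constituent `χ` of the induced character has degree prime to `p`.
Comparing the weight spaces of `χ` for `P` shows that the orbit of `a` has at most `χ(1)` elements
and that at most `χ(1)` linear characters `l` of `G` satisfy `l χ = χ`.

Average below `2` means that there are so few characters of large degree that `χ(1) - 2`, divided by
the order of the stabilizer of `χ` under twisting, has sum less than `1` over distinct twist orbits.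
As `|G|` is odd, `χ` and its dual lie in different orbits if `a ≠ 1`; this forces `χ(1) = 3` with a
stabilizer of order `3`, and leaves room for no classes but `1` and the orbits of `a` and `a⁻¹`.
Hence `|A| = 1 + 2 k` with `k` odd and `k ≤ 3`, so that `|A|` is `3` or `7`. But `|A|` is a power
of `p`, while `p ∤ χ(1) = 3` and `p ≠ 7`.
-/

section Transfer

variable {G A : Type*} [Group G] [CommGroup A]

theorem transfer_eq_pow_index {H : Subgroup G} [H.FiniteIndex] (φ : H →* A) (h : H)
    (hconj : ∀ (k : ℕ) (g : G) (hg : g⁻¹ * (h : G) ^ k * g ∈ H), φ ⟨_, hg⟩ = φ h ^ k) :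
    φ.transfer (h : G) = φ h ^ H.index := by
  classical
  let := H.fintypeQuotientOfFiniteIndex
  rw [MonoidHom.transfer_eq_prod_quotient_orbitRel_zpowers_quot,
    Finset.prod_congr rfl fun q _ => hconj _ _ _, Finset.prod_pow_eq_pow_sum,
    Subgroup.index_eq_sum_minimalPeriod H (h : G)]

theorem monoidHom_pow_natCard (μ : G →* A) :
    μ ^ Nat.card G = 1 := MonoidHom.ext fun x => by
  rw [MonoidHom.pow_apply, ← map_pow, pow_card_eq_one', map_one, MonoidHom.one_apply]

theorem exists_extension_of_coprime [Finite G] {P : Type*} [Group P] (j : P →* G)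
    (hj : Function.Injective j) (hcop : (Nat.card P).Coprime j.range.index) (μ : P →* A)
    (hμ : ∀ (g : G) (x y : P), g⁻¹ * j x * g = j y → μ y = μ x) :
    ∃ ν : G →* A, ν.comp j = μ := by
  let e : P ≃* j.range := j.ofInjective hj
  have he (y : j.range) : j (e.symm y) = y := congrArg Subtype.val (e.apply_symm_apply y)
  have : Finite P := Finite.of_injective j hj
  have htransfer (x : P) : (μ.comp e.symm.toMonoidHom).transfer (j x) = μ x ^ j.range.index := by
    refine (transfer_eq_pow_index (μ.comp e.symm.toMonoidHom) (e x) ?_).trans (by simp)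
    rintro k g hg
    simpa using hμ g (x ^ k) (e.symm ⟨_, hg⟩) (by rw [he, map_pow]; rfl)
  obtain ⟨m, hm⟩ := exists_pow_eq_self_of_coprime
    (hcop.symm.coprime_dvd_right (orderOf_dvd_of_pow_eq_one (monoidHom_pow_natCard μ)))
  refine ⟨(μ.comp e.symm.toMonoidHom).transfer ^ m, MonoidHom.ext fun x => ?_⟩
  rw [MonoidHom.comp_apply, MonoidHom.pow_apply, htransfer, ← MonoidHom.pow_apply,
    ← MonoidHom.pow_apply, hm]

end Transfer

section PResidual

variable (p : ℕ) (G : Type*) [Group G]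

/-- The `p`-residual `O^p(G)`: the intersection of all normal subgroups of `p`-power index. -/
def pResidual : Subgroup G :=
  sInf {R | R.Normal ∧ ∃ n : ℕ, R.index = p ^ n}

instance pResidual_normal : (pResidual p G).Normal where
  conj_mem x hx g := Subgroup.mem_sInf.mpr fun R hR =>
    hR.1.conj_mem x (Subgroup.mem_sInf.mp hx R hR) g

variable {p G}

theorem pResidual_le {R : Subgroup G} [hR : R.Normal] {n : ℕ} (hn : R.index = p ^ n) :
    pResidual p G ≤ R :=
  sInf_le ⟨hR, n, hn⟩

theorem exists_index_pResidual_eq_pow [Finite G] [Fact p.Prime] :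
    ∃ n : ℕ, (pResidual p G).index = p ^ n := by
  refine IsPGroup.iff_card.mp fun x => ⟨(Nat.card G).factorization p, ?_⟩
  obtain ⟨g, rfl⟩ := QuotientGroup.mk_surjective x
  refine (QuotientGroup.eq_one_iff (g ^ _)).mpr (Subgroup.mem_sInf.mpr ?_)
  rintro R ⟨hR, n, hn⟩
  obtain ⟨k, hk⟩ := hn ▸ (pow_dvd_pow p
    (((Nat.Prime.pow_dvd_iff_le_factorization Fact.out Nat.card_pos.ne').mp
      (hn ▸ R.index_dvd_card))))
  rw [hk, pow_mul]
  exact R.pow_mem (R.pow_index_mem g) k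

theorem sylow_sup_pResidual [Finite G] [Fact p.Prime] (P : Sylow p G) :
    (P : Subgroup G) ⊔ pResidual p G = ⊤ := by
  obtain ⟨n, hn⟩ := exists_index_pResidual_eq_pow (p := p) (G := G)
  have hcop := ((Nat.Prime.coprime_iff_not_dvd Fact.out).mpr P.not_dvd_index).pow_left n
  rw [← Subgroup.index_eq_one, ← Nat.dvd_one, ← hcop.gcd_eq_one]
  exact Nat.dvd_gcd (hn ▸ Subgroup.index_dvd_of_le le_sup_right)
    (Subgroup.index_dvd_of_le le_sup_left)

end PResidual

section Tate

variable {G A : Type*} [Group G] [CommGroup A]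

/-- The group of pairs in `G × P` with equal images in `G ⧸ K`, an extension of `G` by `P ⊓ K`. -/
def congruencePairs (P K : Subgroup G) [K.Normal] : Subgroup (G × P) :=
  MonoidHom.eqLocus ((QuotientGroup.mk' K).comp (MonoidHom.fst G P))
    ((QuotientGroup.mk' K).comp (P.subtype.comp (MonoidHom.snd G P)))

namespace congruencePairs

variable {P K : Subgroup G} [K.Normal]

theorem mem_iff {a : G × P} : a ∈ congruencePairs P K ↔ a.1⁻¹ * a.2 ∈ K :=
  QuotientGroup.eq

variable (P K) in
/-- The projection to the first factor. -/
def fst : congruencePairs P K →* G := (MonoidHom.fst G P).comp (Subgroup.subtype _)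

theorem fst_surjective (hPK : P ⊔ K = ⊤) : Function.Surjective (fst P K) := by
  intro g
  obtain ⟨y, hy, k, hk, rfl⟩ := Subgroup.mem_sup_of_normal_right.mp (hPK ▸ Subgroup.mem_top g)
  exact ⟨⟨(y * k, ⟨y, hy⟩), mem_iff.mpr (by simpa using hk)⟩, rfl⟩

/-- The homomorphism `(x, y) ↦ χ (x⁻¹ y)` on the pairs whose first entry lies in `P`, for a
`P`-invariant homomorphism `χ` on `P ⊓ K`. -/
def diffHom (χ : K.subgroupOf P →* A) (hχ : ∀ (y : P) x, χ (MulAut.conjNormal y x) = χ x) :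
    P.comap (fst P K) →* A where
  toFun a := χ ⟨((fst P K).subgroupComap P a)⁻¹ * a.1.1.2, mem_iff.mp a.1.2⟩
  map_one' := by
    rw [← map_one χ]; congr 1; ext; simp
  map_mul' a b := by
    rw [← hχ ((fst P K).subgroupComap P b)⁻¹
      ⟨((fst P K).subgroupComap P a)⁻¹ * a.1.1.2, mem_iff.mp a.1.2⟩, ← map_mul]
    congr 1; ext
    simp [mul_assoc]

/-- The embedding `x ↦ (1, x)` of `P ⊓ K`. -/
def inr (x : K.subgroupOf P) : congruencePairs P K :=
  ⟨(1, x), mem_iff.mpr (by simpa using Subgroup.mem_subgroupOf.mp x.2)⟩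

variable (P K) in
/-- The embedding `k ↦ (k, 1)` of `K`. -/
def inl : K →* congruencePairs P K :=
  ((MonoidHom.inl G P).comp K.subtype).codRestrict _ fun k => mem_iff.mpr (by simp)

variable (P K) in
/-- The diagonal embedding of `P`. -/
def diag : P →* congruencePairs P K :=
  (P.subtype.prod (MonoidHom.id P)).codRestrict _ fun y => mem_iff.mpr (by simp)

theorem diag_eq (x : K.subgroupOf P) : diag P K x = inl P K ⟨(x : P), x.2⟩ * inr x := by
  ext <;> simp [diag, inl, inr]

section DiffHom

variable {χ : K.subgroupOf P →* A} {hχ : ∀ (y : P) x, χ (MulAut.conjNormal y x) = χ x}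

theorem diffHom_of_eq_inr {a : P.comap (fst P K)} {x : K.subgroupOf P}
    (ha : (a : congruencePairs P K) = inr x) : diffHom χ hχ a = χ x := by
  obtain ⟨_, hx⟩ := a
  subst ha
  change χ _ = χ x
  congr 1; ext
  change ((1 : G))⁻¹ * (x : P) = (x : P)
  simp

theorem transfer_diffHom_inr [Finite G] (hPK : P ⊔ K = ⊤) (x : K.subgroupOf P) :
    (diffHom χ hχ).transfer (inr x) = χ x ^ P.index := by
  have hx : inr x ∈ P.comap (fst P K) := P.one_mem
  have hval : diffHom χ hχ ⟨inr x, hx⟩ = χ x := diffHom_of_eq_inr rfl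
  rw [← Subgroup.index_comap_of_surjective P (fst_surjective hPK), ← hval]
  refine transfer_eq_pow_index (diffHom χ hχ) ⟨inr x, hx⟩ fun k g hg => ?_
  rw [hval, ← map_pow, ← hχ g.1.2⁻¹ (x ^ k)]
  refine diffHom_of_eq_inr ?_
  ext <;> simp [-map_pow, inr]

end DiffHom

end congruencePairs

open congruencePairs in
theorem transfer_inl_eq_one {p : ℕ} [Fact p.Prime] [Finite G] {P : Subgroup G}
    (hPK : P ⊔ pResidual p G = ⊤) [Finite A] (hA : IsPGroup p A)
    (V : congruencePairs P (pResidual p G) →* A) (k : pResidual p G) :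
    V (inl P (pResidual p G) k) = 1 := by
  let R : Subgroup G := (V.comp (inl P (pResidual p G))).ker.map (pResidual p G).subtype
  have hR : R.Normal := by
    refine ⟨?_⟩
    rintro _ ⟨x, hx, rfl⟩ g
    refine ⟨MulAut.conjNormal g x, ?_, by simp⟩
    obtain ⟨a, rfl⟩ := fst_surjective hPK g
    have hconj : inl P (pResidual p G) (MulAut.conjNormal (fst P (pResidual p G) a) x) =
        a * inl P (pResidual p G) x * a⁻¹ := by
      ext <;> simp [inl, fst]
    simpa [hconj] using hx
  obtain ⟨m, hm⟩ := exists_index_pResidual_eq_pow (p := p) (G := G)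
  obtain ⟨n, hn⟩ := IsPGroup.iff_card.mp (hA.to_subgroup (V.comp (inl P (pResidual p G))).range)
  have hindex : R.index = p ^ (n + m) := by
    rw [Subgroup.index_map_subtype, Subgroup.index_ker, hn, hm, pow_add]
  obtain ⟨x, hx, hxk⟩ := pResidual_le hindex k.2
  rwa [← Subtype.ext hxk]

theorem invariant_hom_eq_one {p : ℕ} [Fact p.Prime] [Finite G] (P : Sylow p G)
    (hP : (pResidual p G).subgroupOf (P : Subgroup G) ≤ commutator P) [Finite A] (hA : IsPGroup p A)
    (χ : (pResidual p G).subgroupOf (P : Subgroup G) →* A)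
    (hχ : ∀ (y : (P : Subgroup G)) x, χ (MulAut.conjNormal y x) = χ x) :
    χ = 1 := by
  have hPK := sylow_sup_pResidual P
  ext x
  let V : congruencePairs P (pResidual p G) →* A := (congruencePairs.diffHom χ hχ).transfer
  have hdiag : V (congruencePairs.diag _ _ x) = 1 :=
    Abelianization.commutator_subset_ker (V.comp (congruencePairs.diag _ _)) (hP x.2)
  rw [congruencePairs.diag_eq, map_mul, transfer_inl_eq_one hPK hA, one_mul,
    congruencePairs.transfer_diffHom_inr hPK] at hdiag
  exact (hA.powEquiv' P.not_dvd_index).injective (hdiag.trans (one_pow _).symm)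

open QuotientGroup in
/-- The tautological invariant homomorphism on a normal subgroup `N`, which is central modulo
`[N, G]`. -/
def toCenterQuotient (N : Subgroup G) [N.Normal] :
    N →* Subgroup.center (G ⧸ ⁅N, (⊤ : Subgroup G)⁆) :=
  ((mk' ⁅N, (⊤ : Subgroup G)⁆).comp N.subtype).codRestrict _ fun x =>
    Subgroup.mem_center_iff.mpr fun y => by
      obtain ⟨g, rfl⟩ := mk_surjective y
      have hcomm := Subgroup.commutator_mem_commutator (N.inv_mem x.2) (Subgroup.mem_top g⁻¹)
      exact QuotientGroup.eq.mpr (by simpa [commutatorElement_def, mul_assoc] using hcomm)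

theorem toCenterQuotient_conj {N : Subgroup G} [N.Normal] (g : G) (x : N) :
    toCenterQuotient N (MulAut.conjNormal g x) = toCenterQuotient N x := by
  have hcentral := Subgroup.mem_center_iff.mp (toCenterQuotient N x).2 g
  exact Subtype.ext (mul_inv_eq_of_eq_mul hcentral)

open scoped IsMulCommutative in
theorem subgroupOf_le_commutator_top {p : ℕ} [Fact p.Prime] [Finite G] (P : Sylow p G)
    (hP : (pResidual p G).subgroupOf (P : Subgroup G) ≤ commutator P) :
    (pResidual p G).subgroupOf (P : Subgroup G) ≤
      ⁅(pResidual p G).subgroupOf (P : Subgroup G), ⊤⁆ := by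
  have htriv := invariant_hom_eq_one P hP ((P.2.to_quotient _).to_subgroup _)
    (toCenterQuotient ((pResidual p G).subgroupOf (P : Subgroup G))) toCenterQuotient_conj
  intro x hx
  have hx1 := congrArg Subtype.val (DFunLike.congr_fun htriv ⟨x, hx⟩)
  exact (QuotientGroup.eq_one_iff x).mp hx1

theorem coprime_card_pResidual {p : ℕ} [Fact p.Prime] [Finite G] (P : Sylow p G)
    (hP : (pResidual p G).subgroupOf (P : Subgroup G) ≤ commutator P) :
    (Nat.card (pResidual p G)).Coprime p := by
  have hbot : (pResidual p G).subgroupOf (P : Subgroup G) = ⊥ := by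
    obtain ⟨n, hn⟩ := Subgroup.nilpotent_iff_lowerCentralSeries.mp P.2.isNilpotent
    have hle (m : ℕ) : (pResidual p G).subgroupOf (P : Subgroup G) ≤
        (⊤ : Subgroup P).lowerCentralSeries m := by
      induction m with
      | zero => simp
      | succ m ih =>
        exact (subgroupOf_le_commutator_top P hP).trans (Subgroup.commutator_mono ih le_rfl)
    exact le_bot_iff.mp (hn ▸ hle n)
  have hcompl : Subgroup.IsComplement' (pResidual p G) (P : Subgroup G) :=
    Subgroup.isComplement'_of_disjoint_and_mul_eq_univ (Subgroup.subgroupOf_eq_bot.mp hbot)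
      (by rw [← Subgroup.normal_mul, sup_comm, sylow_sup_pResidual, Subgroup.coe_top])
  rw [← hcompl.index_eq_card, Nat.coprime_comm, Nat.Prime.coprime_iff_not_dvd Fact.out]
  exact P.not_dvd_index

/-- Tate's `p`-nilpotency criterion. -/
theorem hasNormalPComplement_of_focalSubgroupOf_le {G : Type} [Group G] [Finite G] {p : ℕ}
    [Fact p.Prime] (P : Sylow p G) (hP : (P : Subgroup G).focalSubgroupOf ≤ commutator P) :
    HasNormalPComplement p G := by
  obtain ⟨n, hn⟩ := exists_index_pResidual_eq_pow (p := p) (G := G)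
  refine ⟨pResidual p G, inferInstance, coprime_card_pResidual P ?_, n, hn⟩
  obtain ⟨m, hm⟩ := (P.2.to_quotient (P : Subgroup G).focalSubgroupOf).exists_card_eq
  have hindex := Nat.card_congr
    (Subgroup.transferFocal.quotientKerMulEquivQuotientFocalSubroupOf P).toEquiv
  have hker : pResidual p G ≤ (P : Subgroup G).transferFocal.ker := pResidual_le (hindex.trans hm)
  intro x hx
  refine hP ?_
  rw [← Subgroup.ker_restrict_transferFocal_eq_focalSubgroupOf]
  exact hker hx

theorem hasNormalPComplement_of_forall_exists_extension {G : Type} [Group G] [Finite G] {p : ℕ}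
    [Fact p.Prime] (P : Sylow p G)
    (hext : ∀ μ : P →* ℂˣ, ∃ ν : G →* ℂˣ, ν.comp (P : Subgroup G).subtype = μ) :
    HasNormalPComplement p G := by
  refine hasNormalPComplement_of_focalSubgroupOf_le P fun x hx => ?_
  by_contra hxc
  obtain ⟨μ, hμ⟩ := CommGroup.exists_apply_ne_one_of_hasEnoughRootsOfUnity
    (Abelianization P) ℂ (mt (QuotientGroup.eq_one_iff x).mp hxc)
  obtain ⟨ν, hν⟩ := hext (μ.comp Abelianization.of)
  refine hμ ((DFunLike.congr_fun hν x).symm.trans ?_)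
  exact Abelianization.commutator_subset_ker ν
    (Subgroup.focalSubgroup_le_commutator (P : Subgroup G) hx)

end Tate

section WeightSpace

theorem sum_finrank_le_of_iSupIndep {k V ι : Type*} [Field k] [AddCommGroup V] [Module k V]
    [FiniteDimensional k V] {p : ι → Submodule k V} (hp : iSupIndep p) (s : Finset ι)
    {W : Submodule k V} (hW : ∀ i ∈ s, p i ≤ W) :
    ∑ i ∈ s, Module.finrank k (p i) ≤ Module.finrank k W := by
  classical
  have hsup : ∑ i ∈ s, Module.finrank k (p i) = Module.finrank k (s.sup p : Submodule k V) := by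
    have hs := hp.supIndep' s
    clear hW
    induction s using Finset.induction_on with
    | empty => rw [Finset.sum_empty, Finset.sup_empty, finrank_bot]
    | insert i s hi ih =>
      have hdisj : Disjoint (p i) (s.sup p) :=
        hs (Finset.subset_insert i s) (Finset.mem_insert_self i s) hi
      rw [Finset.sum_insert hi, Finset.sup_insert, ih (hs.subset (Finset.subset_insert i s)),
        ← Submodule.finrank_sup_add_finrank_inf_eq, hdisj.eq_bot, finrank_bot, add_zero]
  exact hsup ▸ Submodule.finrank_mono (Finset.sup_le hW)

theorem linearIndependent_coe_monoidHom_units (H k : Type*) [Group H] [Field k] :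
    LinearIndependent k fun (η : H →* kˣ) x => (η x : k) :=
  (linearIndependent_monoidHom H k).comp (fun η => (Units.coeHom k).comp η)
    fun _ _ h => MonoidHom.ext fun x => Units.ext (DFunLike.congr_fun h x)

variable {k H V : Type*} [Field k] [Group H] [AddCommGroup V] [Module k V]

/-- The tensor product of a representation with a linear character, realised on the same space. -/
def twist (η : H →* kˣ) (ρ : Representation k H V) : Representation k H V where
  toFun x := (η x : k) • ρ x
  map_one' := by simp
  map_mul' x y := by rw [smul_mul_smul_comm]; simp

theorem character_twist (η : H →* kˣ) (ρ : Representation k H V) (x : H) :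
    (twist η ρ).character x = η x * ρ.character x :=
  map_smul (LinearMap.trace k V) _ _

/-- The subspace of vectors on which `H` acts through the linear character `η`. -/
noncomputable def weightSpace (ρ : Representation k H V) (η : H →* kˣ) : Submodule k V :=
  (twist η⁻¹ ρ).invariants

theorem mem_weightSpace {ρ : Representation k H V} {η : H →* kˣ} {v : V} :
    v ∈ weightSpace ρ η ↔ ∀ x, ρ x v = (η x : k) • v := by
  refine (Representation.mem_invariants _ _).trans (forall_congr' fun x => ?_)
  change ((η x)⁻¹ : kˣ) • ρ x v = v ↔ ρ x v = η x • v
  rw [inv_smul_eq_iff]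

theorem weightSpace_le_comp {H' : Type*} [Group H'] (ρ : Representation k H V) (η : H →* kˣ)
    (j : H' →* H) : weightSpace ρ η ≤ weightSpace (ρ.comp j) (η.comp j) := fun _ hv =>
  mem_weightSpace.mpr fun x => mem_weightSpace.mp hv (j x)

theorem iSupIndep_weightSpace (ρ : Representation k H V) : iSupIndep (weightSpace ρ) := by
  refine (iSupIndep_iff_finsetSum_eq_zero_imp_eq_zero _).mpr fun s v hv hsum η hη => ?_
  refine (Module.forall_dual_apply_eq_zero_iff k (v η)).mp fun φ => ?_
  refine linearIndependent_iff'.mp (linearIndependent_coe_monoidHom_units H k) s (fun η => φ (v η))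
    (funext fun x => ?_) η hη
  have hx : ∑ η ∈ s, (η x : k) • v η = 0 := by
    rw [← map_zero (ρ x), ← hsum, map_sum]
    exact Finset.sum_congr rfl fun η hη => (mem_weightSpace.mp (hv η hη) x).symm
  simpa [mul_comm] using congrArg φ hx

variable [FiniteDimensional k V] [CharZero k]

theorem finrank_weightSpace [Fintype H] (ρ : Representation k H V) (η : H →* kˣ) :
    (Module.finrank k (weightSpace ρ η) : k) =
      (Nat.card H : k)⁻¹ * ∑ x, ((η x)⁻¹ : kˣ) * ρ.character x := by
  have := invertibleOfNonzero (Nat.cast_ne_zero (R := k).mpr (Nat.card_pos (α := H)).ne')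
  rw [weightSpace, ← Representation.card_inv_mul_sum_char_eq_finrank]
  simp only [character_twist, MonoidHom.inv_apply]

theorem finrank_weightSpace_dual [Finite H] (ρ : Representation k H V) (η : H →* kˣ) :
    Module.finrank k (weightSpace ρ.dual η⁻¹) = Module.finrank k (weightSpace ρ η) := by
  have := Fintype.ofFinite H
  refine Nat.cast_injective (R := k) ?_
  rw [finrank_weightSpace, finrank_weightSpace]
  congr 1
  exact Fintype.sum_equiv (Equiv.inv H) _ _ fun x => by simp

end WeightSpace

section Irr

variable {G : Type} [Group G]

theorem charDeg_character {V : Type*} [AddCommGroup V] [Module ℂ V] [FiniteDimensional ℂ V]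
    (ρ : Representation ℂ G V) : charDeg ρ.character = Module.finrank ℂ V := by
  simp [charDeg]

/-- Linear characters act on complex functions by pointwise multiplication. -/
instance twistMulAction : MulAction (G →* ℂˣ) (G → ℂ) :=
  MulAction.compHom _ (MonoidHom.coeFn G ℂˣ)

theorem twist_smul_apply (l : G →* ℂˣ) (f : G → ℂ) (x : G) : (l • f) x = l x * f x :=
  rfl

theorem charDeg_smul (l : G →* ℂˣ) (f : G → ℂ) : charDeg (l • f) = charDeg f := by
  simp [charDeg, twist_smul_apply]

theorem exists_representation_of_mem_Irr {f : G → ℂ} (hf : f ∈ Irr G) :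
    ∃ (V : Type) (_ : AddCommGroup V) (_ : Module ℂ V) (_ : FiniteDimensional ℂ V)
      (ρ : Representation ℂ G V), ρ.character = f := by
  obtain ⟨V, -, rfl⟩ := hf
  exact ⟨V, inferInstance, inferInstance, inferInstance, V.ρ, rfl⟩

theorem apply_one_of_mem_Irr {f : G → ℂ} (hf : f ∈ Irr G) : f 1 = charDeg f := by
  obtain ⟨V, _, _, _, ρ, rfl⟩ := exists_representation_of_mem_Irr hf
  rw [charDeg_character, Representation.char_one]

theorem exists_coe_eq_of_charDeg_eq_one {f : G → ℂ} (hf : f ∈ Irr G) (h1 : charDeg f = 1) :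
    ∃ l : G →* ℂˣ, f = fun x => (l x : ℂ) := by
  obtain ⟨V, _, _, _, ρ, rfl⟩ := exists_representation_of_mem_Irr hf
  rw [charDeg_character] at h1
  refine ⟨(LinearMap.det.comp ρ).toHomUnits, funext fun x => ?_⟩
  obtain ⟨c, hc, -⟩ := (ρ x).existsUnique_eq_smul_id_of_finrank_eq_one h1
  have hdet : LinearMap.det (ρ x) = c := by simp [hc, h1]
  have htrace : LinearMap.trace ℂ V (ρ x) = c := by simp [hc, h1]
  exact htrace.trans hdet.symm

theorem character_mem_Irr_iff [Fintype G] {V : Type} [AddCommGroup V] [Module ℂ V]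
    [FiniteDimensional ℂ V] (ρ : Representation ℂ G V) :
    ρ.character ∈ Irr G ↔ ∑ g, ρ.character g * ρ.character g⁻¹ = (Nat.card G : ℂ) := by
  constructor
  · rintro ⟨V, hV, h⟩
    rw [h]
    exact (FDRep.simple_iff_char_is_norm_one V).mp hV
  · exact fun h => ⟨FDRep.of ρ, (FDRep.simple_iff_char_is_norm_one _).mpr h, rfl⟩

theorem sum_mul_inv_of_mem_Irr [Fintype G] {f : G → ℂ} (hf : f ∈ Irr G) :
    ∑ g, f g * f g⁻¹ = (Nat.card G : ℂ) := by
  obtain ⟨V, _, _, _, ρ, rfl⟩ := exists_representation_of_mem_Irr hf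
  exact (character_mem_Irr_iff ρ).mp hf

theorem sum_mul_inv_eq_zero [Fintype G] {f f' : G → ℂ} (hf : f ∈ Irr G) (hf' : f' ∈ Irr G)
    (hne : f ≠ f') : ∑ g, f g * f' g⁻¹ = 0 := by
  obtain ⟨V, hV, rfl⟩ := hf
  obtain ⟨W, hW, rfl⟩ := hf'
  have hcard : (Nat.card G : ℂ) ≠ 0 := Nat.cast_ne_zero.mpr Nat.card_pos.ne'
  have := invertibleOfNonzero hcard
  have h := FDRep.char_orthonormal V W
  rw [if_neg fun ⟨i⟩ => hne (FDRep.char_iso i)] at h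
  exact (mul_eq_zero.mp h).resolve_left (inv_ne_zero hcard)

variable [Finite G]

theorem smul_mem_Irr (l : G →* ℂˣ) {f : G → ℂ} (hf : f ∈ Irr G) : l • f ∈ Irr G := by
  have := Fintype.ofFinite G
  obtain ⟨V, _, _, _, ρ, rfl⟩ := exists_representation_of_mem_Irr hf
  have hchar : (twist l ρ).character = l • ρ.character := funext (character_twist l ρ)
  rw [← hchar, character_mem_Irr_iff, ← sum_mul_inv_of_mem_Irr hf]
  refine Finset.sum_congr rfl fun g _ => ?_
  rw [character_twist, character_twist, mul_mul_mul_comm, ← Units.val_mul, ← map_mul]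
  simp

theorem comp_inv_mem_Irr {f : G → ℂ} (hf : f ∈ Irr G) : (fun g => f g⁻¹) ∈ Irr G := by
  have := Fintype.ofFinite G
  obtain ⟨V, _, _, _, ρ, rfl⟩ := exists_representation_of_mem_Irr hf
  have hchar : ρ.dual.character = fun g => ρ.character g⁻¹ := funext (Representation.char_dual ρ)
  rw [← hchar, character_mem_Irr_iff, ← sum_mul_inv_of_mem_Irr hf, hchar]
  exact Fintype.sum_equiv (Equiv.inv G) _ _ fun g => rfl

theorem linearIndependent_Irr : LinearIndependent ℂ ((↑) : Irr G → G → ℂ) := by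
  have := Fintype.ofFinite G
  classical
  refine linearIndependent_iff'.mpr fun s c hc f hf => ?_
  have hortho : ∑ g, (∑ f' ∈ s, c f' • (f' : G → ℂ)) g * f.1 g⁻¹ = c f * Nat.card G := by
    simp only [Finset.sum_apply, Pi.smul_apply, smul_eq_mul, Finset.sum_mul, mul_assoc]
    rw [Finset.sum_comm, Finset.sum_eq_single_of_mem f hf, ← Finset.mul_sum,
      sum_mul_inv_of_mem_Irr f.2]
    intro f' _ hne
    rw [← Finset.mul_sum, sum_mul_inv_eq_zero f'.2 f.2 (Subtype.coe_ne_coe.mpr hne), mul_zero]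
  rw [hc] at hortho
  simpa using hortho.symm

theorem finite_Irr : (Irr G).Finite :=
  linearIndependent_Irr.setFinite

theorem character_mem_Irr_of_isIrreducible {V : Type} [AddCommGroup V] [Module ℂ V]
    [FiniteDimensional ℂ V] (ρ : Representation ℂ G V) [ρ.IsIrreducible] :
    ρ.character ∈ Irr G := by
  have := Fintype.ofFinite G
  have hcard : (Nat.card G : ℂ) ≠ 0 := Nat.cast_ne_zero.mpr Nat.card_pos.ne'
  have := invertibleOfNonzero hcard
  rw [character_mem_Irr_iff, eq_comm, ← inv_mul_eq_one₀ hcard,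
    Representation.card_inv_mul_sum_char_mul_char_eq_finrank,
    Representation.IsIrreducible.finrank_intertwiningMap_self, Nat.cast_one]

end Irr

section LiesOver

variable {G : Type} [Group G]

/-- `f` has nonzero inner product with the linear character `ν` of `B`; when `f` is a character
this says that `ν` is a constituent of its restriction to `B`. -/
def LiesOver {B : Subgroup G} (f : G → ℂ) (ν : B →* ℂˣ) : Prop :=
  ∑ᶠ x : B, ((ν x)⁻¹ : ℂˣ) * f x ≠ 0

theorem LiesOver.smul {B : Subgroup G} {f : G → ℂ} {ν : B →* ℂˣ} (h : LiesOver f ν)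
    (l : G →* ℂˣ) : LiesOver (l • f) (l.comp B.subtype * ν) := by
  refine ne_of_eq_of_ne (finsum_congr fun x => ?_) h
  simp only [twist_smul_apply, MonoidHom.mul_apply, MonoidHom.comp_apply, Subgroup.subtype_apply,
    mul_inv_rev, Units.val_mul, mul_assoc, Units.inv_mul_cancel_left]

theorem LiesOver.comp_inv {B : Subgroup G} {f : G → ℂ} {ν : B →* ℂˣ} (h : LiesOver f ν) :
    LiesOver (fun g => f g⁻¹) ν⁻¹ := by
  rw [LiesOver, ← finsum_comp_equiv (Equiv.inv B)] at h
  simpa [LiesOver] using h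

theorem liesOver_character_iff [Finite G] {V : Type*} [AddCommGroup V] [Module ℂ V]
    [FiniteDimensional ℂ V] (ρ : Representation ℂ G V) {B : Subgroup G} (ν : B →* ℂˣ) :
    LiesOver ρ.character ν ↔ weightSpace (ρ.comp B.subtype) ν ≠ ⊥ := by
  have := Fintype.ofFinite B
  have hcard : (Nat.card B : ℂ) ≠ 0 := Nat.cast_ne_zero.mpr Nat.card_pos.ne'
  rw [LiesOver, finsum_eq_sum_of_fintype, ← Submodule.finrank_eq_zero.ne,
    ← Nat.cast_ne_zero (R := ℂ), finrank_weightSpace]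
  exact (mul_ne_zero_iff_left (inv_ne_zero hcard)).symm

end LiesOver

section Existence

theorem exists_isAtom_not_dvd_finrank {k G V : Type*} [Field k] [Group G] [AddCommGroup V]
    [Module k V] [FiniteDimensional k V] (ρ : Representation k G V)
    [ComplementedLattice (Subrepresentation ρ)] {n : ℕ} (hn : ¬ n ∣ Module.finrank k V) :
    ∃ U : Subrepresentation ρ, IsAtom U ∧ ¬ n ∣ Module.finrank k U.toSubmodule := by
  obtain ⟨U, hU, hmin⟩ := exists_minimalFor_of_wellFoundedLT
    (fun U : Subrepresentation ρ => ¬ n ∣ Module.finrank k U.toSubmodule)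
    (fun U => Module.finrank k U.toSubmodule) ⟨⊤, (finrank_top k V).symm ▸ hn⟩
  have hdvd : ∀ X : Subrepresentation ρ, X < U → n ∣ Module.finrank k X.toSubmodule := by
    intro X hXU
    by_contra hX
    exact (Submodule.finrank_lt_finrank_of_lt hXU).not_ge (hmin hX (Submodule.finrank_mono hXU.le))
  refine ⟨U, ⟨?_, fun X hXU => ?_⟩, hU⟩
  · rintro rfl
    exact hU ((finrank_bot k V).symm ▸ dvd_zero n)
  by_contra hX
  obtain ⟨Y, hXY⟩ := exists_isCompl X
  have hsup : X ⊔ Y ⊓ U = U := Subrepresentation.toSubmodule_injective <|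
    (sup_inf_assoc_of_le Y.toSubmodule (z := U.toSubmodule) hXU.le).symm.trans <|
      (congrArg (Subrepresentation.toSubmodule · ⊓ U.toSubmodule) hXY.sup_eq_top).trans
        (top_inf_eq _)
  have hinf : X ⊓ (Y ⊓ U) = ⊥ := by rw [← inf_assoc, hXY.inf_eq_bot, bot_inf_eq]
  have hYU : Y ⊓ U < U := inf_le_right.lt_of_ne fun h =>
    hX (by rwa [h, inf_eq_left.mpr hXU.le] at hinf)
  have hsum := Submodule.finrank_sup_add_finrank_inf_eq X.toSubmodule (Y ⊓ U).toSubmodule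
  rw [← Subrepresentation.toSubmodule_sup, ← Subrepresentation.toSubmodule_inf, hsup, hinf] at hsum
  have hbot : Module.finrank k (⊥ : Subrepresentation ρ).toSubmodule = 0 := finrank_bot k V
  rw [hbot, add_zero] at hsum
  exact hU (hsum ▸ dvd_add (hdvd X hXU) (hdvd _ hYU))

theorem isIrreducible_toRepresentation {k G V : Type*} [Field k] [Group G] [AddCommGroup V]
    [Module k V] {ρ : Representation k G V} {U : Subrepresentation ρ} (hU : IsAtom U) :
    U.toRepresentation.IsIrreducible where
  exists_pair_ne := by
    refine ⟨⊥, ⊤, fun h => hU.1 (Subrepresentation.toSubmodule_injective ?_)⟩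
    have htop : (⊥ : Submodule k U.toSubmodule) = ⊤ := congrArg Subrepresentation.toSubmodule h
    exact (Submodule.map_subtype_top _).symm.trans
      ((congrArg (Submodule.map U.toSubmodule.subtype) htop.symm).trans (Submodule.map_bot _))
  eq_bot_or_eq_top X := by
    let X' : Subrepresentation ρ :=
      { toSubmodule := X.toSubmodule.map U.toSubmodule.subtype
        apply_mem_toSubmodule := by
          rintro g _ ⟨v, hv, rfl⟩
          exact ⟨U.toRepresentation g v, X.apply_mem_toSubmodule g hv, rfl⟩ }
    have hX' : X' ≤ U := Submodule.map_subtype_le _ _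
    refine (hU.le_iff.mp hX').imp (fun h => ?_) fun h => ?_
    · refine Subrepresentation.toSubmodule_injective ?_
      exact Submodule.map_injective_of_injective U.toSubmodule.injective_subtype <|
        (congrArg Subrepresentation.toSubmodule h).trans (Submodule.map_bot _).symm
    · refine Subrepresentation.toSubmodule_injective ?_
      exact Submodule.map_injective_of_injective U.toSubmodule.injective_subtype <|
        (congrArg Subrepresentation.toSubmodule h).trans (Submodule.map_subtype_top _).symm

/-- Functions on `G` equivariant under left translation by `B` are determined by their values on a
right transversal of `B`. -/
noncomputable def coindVEquivFun {k G A : Type*} [Field k] [Group G] [AddCommGroup A] [Module k A]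
    {B : Subgroup G} (σ : Representation k B A) {T : Set G}
    (hT : Subgroup.IsComplement (B : Set G) T) :
    Representation.coindV B.subtype σ ≃ₗ[k] (T → A) where
  toFun f t := f.1 t
  map_add' _ _ := rfl
  map_smul' _ _ := rfl
  invFun f := ⟨fun g => σ (hT.equiv g).1 (f (hT.equiv g).2), fun b g => by
    change σ (hT.equiv (b * g)).1 _ = _
    simp [hT.equiv_mul_left]⟩
  left_inv f := by
    refine Subtype.ext (funext fun g => ?_)
    exact (f.2 _ _).symm.trans (congrArg f.1 (hT.equiv_fst_mul_equiv_snd g))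
  right_inv f := by
    funext t
    have hfst : (hT.equiv t).1 = (1 : B) := hT.equiv_fst_eq_one_of_mem_of_one_mem B.one_mem t.2
    have hsnd : (hT.equiv t).2 = t := hT.equiv_snd_eq_self_of_mem_of_one_mem B.one_mem t.2
    simp only [hfst, hsnd, map_one, Module.End.one_apply]

theorem finrank_coindV {k G A : Type*} [Field k] [Group G] [AddCommGroup A] [Module k A]
    [FiniteDimensional k A] {B : Subgroup G} [B.FiniteIndex] (σ : Representation k B A) :
    Module.finrank k (Representation.coindV B.subtype σ) = B.index * Module.finrank k A := by
  obtain ⟨T, hT, -⟩ := B.exists_isComplement_right 1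
  have := Nat.finite_of_card_ne_zero (hT.card_right.trans_ne Subgroup.FiniteIndex.index_ne_zero)
  have := Fintype.ofFinite T
  rw [(coindVEquivFun σ hT).finrank_eq, Module.finrank_pi_fintype, Finset.sum_const,
    Finset.card_univ, ← Nat.card_eq_fintype_card, hT.card_right, smul_eq_mul]

theorem weightSpace_ne_bot_of_functional {k H V : Type*} [Field k] [CharZero k] [Group H] [Finite H]
    [AddCommGroup V] [Module k V] [FiniteDimensional k V] {ρ : Representation k H V} {η : H →* kˣ}
    {φ : Module.Dual k V} (hφ : φ ≠ 0) (hη : ∀ x v, φ (ρ x v) = η x * φ v) :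
    weightSpace ρ η ≠ ⊥ := by
  have hmem : φ ∈ weightSpace ρ.dual η⁻¹ := mem_weightSpace.mpr fun x =>
    LinearMap.ext fun v => (hη x⁻¹ v).trans (by simp)
  intro hbot
  rw [← Submodule.finrank_eq_zero, ← finrank_weightSpace_dual, Submodule.finrank_eq_zero] at hbot
  exact hφ ((Submodule.mem_bot k).mp (hbot ▸ hmem))

theorem exists_mem_Irr_liesOver {G : Type} [Group G] [Finite G] {B : Subgroup G}
    (ν : B →* ℂˣ) {n : ℕ} (hn : ¬ n ∣ B.index) :
    ∃ f ∈ Irr G, ¬ n ∣ charDeg f ∧ LiesOver f ν := by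
  let σ := twist ν (Representation.trivial ℂ B ℂ)
  let τ := Representation.coind B.subtype σ
  have hdim : ¬ n ∣ Module.finrank ℂ (Representation.coindV B.subtype σ) := by
    rwa [finrank_coindV, Module.finrank_self, mul_one]
  have hss : τ.IsSemisimpleRepresentation :=
    τ.isSemisimpleRepresentation_iff_isSemisimpleModule_asModule.mpr inferInstance
  obtain ⟨U, hU, hnU⟩ := exists_isAtom_not_dvd_finrank τ hdim
  have := isIrreducible_toRepresentation hU
  have hirr := character_mem_Irr_of_isIrreducible (V := U.toSubmodule) U.toRepresentation
  refine ⟨_, hirr, ?_, (liesOver_character_iff (V := U.toSubmodule) U.toRepresentation ν).mpr ?_⟩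
  · rwa [charDeg_character (V := U.toSubmodule)]
  let φ : Module.Dual ℂ U.toSubmodule :=
    LinearMap.proj 1 ∘ₗ (Representation.coindV B.subtype σ).subtype ∘ₗ U.toSubmodule.subtype
  have hφ : ∀ g v, φ (U.toRepresentation g v) = v.1.1 g := fun g v =>
    congrArg v.1.1 (one_mul g)
  refine weightSpace_ne_bot_of_functional (φ := φ) (fun h0 => ?_) fun b v => ?_
  · refine hU.1 (Subrepresentation.toSubmodule_injective <|
      (Submodule.eq_bot_iff _).mpr fun v hv => ?_)
    exact Subtype.ext (funext fun g => (hφ g ⟨v, hv⟩).symm.trans (DFunLike.congr_fun h0 _))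
  · exact (hφ b v).trans ((congrArg v.1.1 (mul_one (b : G)).symm).trans (v.1.2 b 1))

end Existence

section OddDegree

theorem two_dvd_sum_of_involution {R ι : Type*} [CommRing R] {s : Finset ι} {f : ι → R}
    {g : ι → ι} (hf : ∀ i ∈ s, f (g i) = f i) (hne : ∀ i ∈ s, g i ≠ i) (hmem : ∀ i ∈ s, g i ∈ s)
    (hinv : Function.Involutive g) : 2 ∣ ∑ i ∈ s, f i := by
  rw [← Ideal.Quotient.eq_zero_iff_dvd, map_sum]
  refine Finset.sum_involution (fun i _ => g i) (fun i hi => ?_) (fun i hi _ => hne i hi) hmem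
    fun i _ => hinv i
  rw [hf i hi, ← map_add, ← two_mul, Ideal.Quotient.eq_zero_iff_dvd]
  exact dvd_mul_right 2 (f i)

theorem two_dvd_of_two_dvd_natCast_integralClosure {K : Type*} [Field K] [CharZero K] {n : ℕ}
    (h : (2 : integralClosure ℤ K) ∣ n) : 2 ∣ n := by
  obtain ⟨z, hz⟩ := h
  have hzK : (algebraMap ℚ K (n / 2) : K) = z := by
    rw [map_div₀, map_natCast, map_ofNat, div_eq_iff two_ne_zero, mul_comm]
    exact congrArg Subtype.val hz
  have hhalf : IsIntegral ℤ (n / 2 : ℚ) :=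
    (isIntegral_algebraMap_iff (algebraMap ℚ K).injective).mp (hzK ▸ z.2)
  obtain ⟨m, hm⟩ := IsIntegrallyClosed.isIntegral_iff.mp hhalf
  rw [eq_div_iff two_ne_zero, algebraMap_int_eq, eq_intCast] at hm
  exact Int.natCast_dvd_natCast.mp ⟨m, by rw [mul_comm]; exact_mod_cast hm.symm⟩

theorem isIntegral_character {k G V : Type*} [Field k] [IsAlgClosed k] [Group G] [Finite G]
    [AddCommGroup V] [Module k V] [FiniteDimensional k V] (ρ : Representation k G V) (x : G) :
    IsIntegral ℤ (ρ.character x) := by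
  rw [Representation.character,
    Module.End.trace_eq_sum_roots_charpoly_of_splits (IsAlgClosed.splits _)]
  refine IsIntegral.multiset_sum fun c hc => ?_
  have hroot := (Module.End.hasEigenvalue_iff_isRoot_charpoly _ c).mpr
    (Polynomial.isRoot_of_mem_roots hc)
  have hpow := hroot.pow (Nat.card G)
  rw [← map_pow, pow_card_eq_one', map_one] at hpow
  obtain ⟨v, hv⟩ := hpow.exists_hasEigenvector
  have hc1 : c ^ Nat.card G = 1 :=
    smul_left_injective k hv.2 (hv.apply_eq_smul.symm.trans (one_smul k v).symm)
  exact IsIntegral.of_pow Nat.card_pos (hc1 ▸ isIntegral_one)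

theorem inv_ne_self_of_odd_card {G : Type*} [Group G] (hodd : Odd (Nat.card G)) {x : G}
    (hx : x ≠ 1) : x⁻¹ ≠ x := fun h =>
  hx ((powCoprime (Nat.coprime_two_right.mpr hodd)).injective
    (show x ^ 2 = 1 ^ 2 by rw [one_pow, pow_two, ← inv_eq_iff_mul_eq_one, h]))

theorem odd_charDeg {G : Type} [Group G] [Finite G] (hodd : Odd (Nat.card G)) {f : G → ℂ}
    (hf : f ∈ Irr G) : Odd (charDeg f) := by
  have := Fintype.ofFinite G
  classical
  obtain ⟨V, _, _, _, ρ, hρ⟩ := exists_representation_of_mem_Irr hf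
  let F (x : G) : integralClosure ℤ ℂ := ⟨f x, hρ ▸ isIntegral_character ρ x⟩
  have hsum : ∑ x, F x * F x⁻¹ = Nat.card G := Subtype.ext <| by
    simpa [F] using sum_mul_inv_of_mem_Irr hf
  have hF1 : F 1 = charDeg f := Subtype.ext (apply_one_of_mem_Irr hf)
  have hdvd : 2 ∣ ∑ x ∈ Finset.univ.erase 1, F x * F x⁻¹ := by
    refine two_dvd_sum_of_involution (g := Inv.inv) (fun x _ => ?_) (fun x hx => ?_)
      (fun x hx => ?_) inv_involutive
    · rw [inv_inv, mul_comm]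
    · exact inv_ne_self_of_odd_card hodd (Finset.ne_of_mem_erase hx)
    · simpa using hx
  by_contra heven
  obtain ⟨m, hm⟩ := (Nat.not_odd_iff_even.mp heven).two_dvd
  refine (Nat.not_even_iff_odd.mpr hodd) (even_iff_two_dvd.mpr
    (two_dvd_of_two_dvd_natCast_integralClosure (K := ℂ) ?_))
  rw [← hsum, ← Finset.add_sum_erase _ _ (Finset.mem_univ 1), inv_one, hF1, hm]
  refine dvd_add (Dvd.dvd.mul_right ?_ _) hdvd
  exact ⟨m, by push_cast; rfl⟩

end OddDegree

section Counting

theorem exists_finset_sum_eq_sum_ncard_orbit {H X M : Type*} [Group H] [Finite H]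
    [MulAction H X] [AddCommMonoid M] {w : X → M} (hw : ∀ (h : H) x, w (h • x) = w x)
    {C : Finset X} (hC : (C : Set X).Pairwise fun x y => y ∉ MulAction.orbit H x) :
    ∃ O : Finset X, (∀ y, y ∈ O ↔ ∃ x ∈ C, y ∈ MulAction.orbit H x) ∧
      ∑ y ∈ O, w y = ∑ x ∈ C, (MulAction.orbit H x).ncard • w x := by
  classical
  have hfin (x : X) : (MulAction.orbit H x).Finite := Set.finite_range _
  refine ⟨C.biUnion fun x => (hfin x).toFinset, fun y => by simp, ?_⟩
  rw [Finset.sum_biUnion fun x hx y hy hne => ?_]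
  · refine Finset.sum_congr rfl fun x _ => ?_
    have hconst : ∀ y ∈ (hfin x).toFinset, w y = w x := fun y hy => by
      obtain ⟨h, rfl⟩ := (hfin x).mem_toFinset.mp hy
      exact hw h x
    rw [Finset.sum_congr rfl hconst, Finset.sum_const, ← Set.ncard_eq_toFinset_card _ (hfin x)]
  · refine Finset.disjoint_left.mpr fun z hzx hzy => hC hx hy hne ?_
    rw [Set.Finite.mem_toFinset] at hzx hzy
    exact MulAction.orbit_eq_iff.mp
      ((MulAction.orbit_eq_iff.mpr hzy).symm.trans (MulAction.orbit_eq_iff.mpr hzx))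

variable {G : Type} [Group G]

theorem acd_mul_card {S : Finset (G → ℂ)} (hS : ↑S ⊆ Irr G) :
    acd (S : Set (G → ℂ)) * S.card = ∑ f ∈ S, (charDeg f : ℝ) := by
  rcases S.eq_empty_or_nonempty with rfl | hne
  · simp
  rw [acd, Set.ncard_coe_finset, finsum_mem_coe_finset,
    div_mul_cancel₀ _ (Nat.cast_ne_zero.mpr hne.card_pos.ne')]
  exact Finset.sum_congr rfl fun f hf => by rw [apply_one_of_mem_Irr (hS hf), Complex.natCast_re]

variable [Finite G]

theorem charDeg_pos_of_mem_Irr {f : G → ℂ} (hf : f ∈ Irr G) : 0 < charDeg f := by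
  have := Fintype.ofFinite G
  obtain ⟨V, _, _, _, ρ, rfl⟩ := exists_representation_of_mem_Irr hf
  refine Nat.pos_of_ne_zero fun h0 => Nat.card_pos (α := G).ne' (Nat.cast_injective (R := ℂ) ?_)
  rw [charDeg_character, Module.finrank_zero_iff] at h0
  rw [← sum_mul_inv_of_mem_Irr hf, Nat.cast_zero]
  refine Finset.sum_eq_zero fun g _ => ?_
  rw [Representation.character, Subsingleton.elim (ρ g) 0, map_zero, zero_mul]

theorem card_filter_charDeg_eq_one_le {S : Finset (G → ℂ)} (hS : ↑S ⊆ Irr G) :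
    (S.filter (charDeg · = 1)).card ≤ Nat.card (G →* ℂˣ) := by
  classical
  have := Fintype.ofFinite (G →* ℂˣ)
  rw [Nat.card_eq_fintype_card]
  refine (Finset.card_le_card fun f hf => ?_).trans
    (Finset.card_image_le (s := Finset.univ) (f := fun (l : G →* ℂˣ) x => (l x : ℂ)))
  obtain ⟨hfS, hf1⟩ := Finset.mem_filter.mp hf
  obtain ⟨l, rfl⟩ := exists_coe_eq_of_charDeg_eq_one (hS hfS) hf1
  exact Finset.mem_image_of_mem _ (Finset.mem_univ l)

theorem sum_charDeg_sub_two_lt_card {S : Set (G → ℂ)} (hS : S ⊆ Irr G) (h : acd S < 2)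
    {O : Finset (G → ℂ)} (hO : ↑O ⊆ S) :
    ∑ f ∈ O, ((charDeg f : ℝ) - 2) < Nat.card (G →* ℂˣ) := by
  classical
  obtain ⟨S, rfl⟩ := (finite_Irr.subset hS).exists_finset_coe
  rcases S.eq_empty_or_nonempty with rfl | hne
  · simp [Finset.subset_empty.mp (Finset.coe_subset.mp hO), Nat.card_pos]
  have hneg : ∑ f ∈ S, ((charDeg f : ℝ) - 2) < 0 := by
    rw [Finset.sum_sub_distrib, ← acd_mul_card hS, Finset.sum_const, nsmul_eq_mul, mul_comm,
      ← mul_sub]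
    exact mul_neg_of_pos_of_neg (Nat.cast_pos.mpr hne.card_pos) (sub_neg.mpr h)
  have hterm : ∀ f ∈ S \ O, -(if charDeg f = 1 then 1 else 0 : ℝ) ≤ charDeg f - 2 := fun f hf => by
    have hpos := charDeg_pos_of_mem_Irr (hS (Finset.mem_sdiff.mp hf).1)
    split_ifs with h1
    · norm_num [h1]
    · have : (2 : ℝ) ≤ charDeg f := by exact_mod_cast (show 2 ≤ charDeg f by omega)
      linarith
  have hrest := Finset.sum_le_sum hterm
  rw [Finset.sum_neg_distrib, Finset.sum_boole] at hrest
  have hlin : (((S \ O).filter (charDeg · = 1)).card : ℝ) ≤ Nat.card (G →* ℂˣ) :=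
    Nat.cast_le.mpr (card_filter_charDeg_eq_one_le fun f hf => hS (Finset.mem_sdiff.mp hf).1)
  have hsplit := Finset.sum_sdiff (f := fun f => (charDeg f : ℝ) - 2) (Finset.coe_subset.mp hO)
  linarith

theorem sum_charDeg_sub_two_div_card_stabilizer_lt_one {S : Set (G → ℂ)} (hS : S ⊆ Irr G)
    (hsmul : ∀ (l : G →* ℂˣ), ∀ f ∈ S, l • f ∈ S) (h : acd S < 2) {C : Finset (G → ℂ)}
    (hC : ↑C ⊆ S) (hdisj : (C : Set (G → ℂ)).Pairwise fun f f' =>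
      f' ∉ MulAction.orbit (G →* ℂˣ) f) :
    ∑ f ∈ C, ((charDeg f : ℝ) - 2) / Nat.card (MulAction.stabilizer (G →* ℂˣ) f) < 1 := by
  obtain ⟨O, hO, hsum⟩ := exists_finset_sum_eq_sum_ncard_orbit (H := G →* ℂˣ)
    (w := fun f => (charDeg f : ℝ) - 2) (fun l f => by rw [charDeg_smul]) hdisj
  have hlt := sum_charDeg_sub_two_lt_card hS h (O := O) fun f' hf' => by
    obtain ⟨f, hf, l, rfl⟩ := (hO f').mp hf'
    exact hsmul l f (hC hf)
  have hLin : (0 : ℝ) < Nat.card (G →* ℂˣ) := Nat.cast_pos.mpr Nat.card_pos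
  rw [← mul_lt_mul_iff_left₀ hLin, one_mul, Finset.sum_mul]
  refine (Finset.sum_congr rfl fun f _ => ?_).trans_lt (hsum ▸ hlt)
  have hstab : (Nat.card (MulAction.stabilizer (G →* ℂˣ) f) : ℝ) ≠ 0 :=
    Nat.cast_ne_zero.mpr Nat.card_pos.ne'
  rw [nsmul_eq_mul, ← MulAction.index_stabilizer,
    ← Subgroup.index_mul_card (MulAction.stabilizer (G →* ℂˣ) f), Nat.cast_mul]
  field_simp

end Counting

section Obstruction

variable {G A : Type*} [Group G] [CommGroup A] {P : Subgroup G}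

/-- The normalizer of `P` acts on the linear characters of `P` by conjugation. -/
instance conjMulDistribMulAction :
    MulDistribMulAction (Subgroup.normalizer (P : Set G)) (P →* A) where
  smul n μ := μ.comp (P.normalizerMonoidHom n⁻¹).toMonoidHom
  one_smul μ := MonoidHom.ext fun x => by
    change μ (P.normalizerMonoidHom 1⁻¹ x) = μ x
    rw [inv_one, map_one, MulAut.one_apply]
  mul_smul m n μ := MonoidHom.ext fun x => by
    change μ (P.normalizerMonoidHom (m * n)⁻¹ x) =
      μ (P.normalizerMonoidHom n⁻¹ (P.normalizerMonoidHom m⁻¹ x))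
    rw [mul_inv_rev, map_mul, MulAut.mul_apply]
  smul_mul _ _ _ := rfl
  smul_one _ := rfl

theorem conj_smul_apply (n : Subgroup.normalizer (P : Set G)) (μ : P →* A) (x : P) :
    (n • μ) x = μ (P.normalizerMonoidHom n⁻¹ x) :=
  rfl

theorem conj_smul_of_mem {n : Subgroup.normalizer (P : Set G)} (hn : (n : G) ∈ P) (μ : P →* A) :
    n • μ = μ := MonoidHom.ext fun x => by
  have hconj : P.normalizerMonoidHom n⁻¹ x = ⟨n, hn⟩⁻¹ * (x * ⟨n, hn⟩) :=
    Subtype.ext (by simp [mul_assoc])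
  rw [conj_smul_apply, hconj, map_mul, mul_comm, ← map_mul, mul_inv_cancel_right]

theorem conj_smul_restrict (n : Subgroup.normalizer (P : Set G)) (l : G →* A) :
    n • l.comp P.subtype = l.comp P.subtype := MonoidHom.ext fun x => by
  have hconj : (P.normalizerMonoidHom n⁻¹ x : G) = (n : G)⁻¹ * (x * n) := by
    simp [mul_assoc]
  rw [conj_smul_apply, MonoidHom.comp_apply, MonoidHom.comp_apply, Subgroup.subtype_apply,
    Subgroup.subtype_apply, hconj, map_mul, mul_comm, ← map_mul, mul_inv_cancel_right]

/-- The linear characters of `P` modulo those that extend to `G`. -/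
abbrev ExtensionObstruction {G : Type*} [Group G] (P : Subgroup G) (A : Type*) [CommGroup A] :
    Type _ :=
  (P →* A) ⧸ (MonoidHom.compHom' (P := A) P.subtype).range

theorem obstruction_eq_one_iff {μ : P →* A} :
    (μ : ExtensionObstruction P A) = 1 ↔ ∃ l : G →* A, l.comp P.subtype = μ :=
  QuotientGroup.eq_one_iff μ

theorem pow_natCard_obstruction (a : ExtensionObstruction P A) : a ^ Nat.card P = 1 := by
  obtain ⟨μ, rfl⟩ := QuotientGroup.mk_surjective a
  exact congrArg QuotientGroup.mk (monoidHom_pow_natCard μ)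

theorem mk_restrict_mul {B : Subgroup G} (hPB : P ≤ B) (l : G →* A) (ν : B →* A) :
    ((l.comp B.subtype * ν).comp (Subgroup.inclusion hPB) : ExtensionObstruction P A) =
      ν.comp (Subgroup.inclusion hPB) := by
  have hl : ((l.comp B.subtype).comp (Subgroup.inclusion hPB) : ExtensionObstruction P A) = 1 :=
    obstruction_eq_one_iff.mpr ⟨l, rfl⟩
  rw [MonoidHom.mul_comp, QuotientGroup.mk_mul, hl, one_mul]

instance : MulAction.QuotientAction (Subgroup.normalizer (P : Set G))
    (MonoidHom.compHom' (P := A) P.subtype).range where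
  inv_mul_mem n μ μ' h := by
    rw [← smul_inv', ← smul_mul']
    obtain ⟨l, hl⟩ := h
    exact ⟨l, by rw [← hl]; exact (conj_smul_restrict n l).symm⟩

/-- The conjugation action induced on the extension obstructions. -/
instance obstructionMulDistribMulAction :
    MulDistribMulAction (Subgroup.normalizer (P : Set G)) (ExtensionObstruction P A) where
  smul_mul n a b := by
    induction a using QuotientGroup.induction_on with | H μ => ?_
    induction b using QuotientGroup.induction_on with | H μ' => ?_
    rfl
  smul_one n := rfl

theorem conj_smul_eq_of_smul_obstruction_eq (hP : (Nat.card P).Coprime P.index)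
    {n : Subgroup.normalizer (P : Set G)} {μ : P →* A}
    (h : n • (μ : ExtensionObstruction P A) = μ) : n • μ = μ := by
  obtain ⟨l, hl⟩ := QuotientGroup.eq.mp h.symm
  replace hl : n • μ = μ * l.comp P.subtype := inv_mul_eq_iff_eq_mul.mp hl.symm
  have hpow (m : ℕ) : n ^ m • μ = μ * l.comp P.subtype ^ m := by
    induction m with
    | zero => simp
    | succ m ih => rw [pow_succ', mul_smul, ih, smul_mul', smul_pow', conj_smul_restrict, hl,
        mul_assoc, pow_succ']
  have hindex : l.comp P.subtype ^ P.relIndex (Subgroup.normalizer (P : Set G)) = 1 := by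
    have hmem := (P.subgroupOf (Subgroup.normalizer (P : Set G))).pow_index_mem n
    exact mul_eq_left.mp ((hpow _).symm.trans (conj_smul_of_mem hmem μ))
  have hcop : (Nat.card P).Coprime (P.relIndex (Subgroup.normalizer (P : Set G))) :=
    hP.coprime_dvd_right ⟨_, (Subgroup.relIndex_mul_index Subgroup.le_normalizer).symm⟩
  rw [hl, ← pow_one (l.comp P.subtype), ← hcop.gcd_eq_one, pow_gcd_eq_one.mpr
    ⟨monoidHom_pow_natCard _, hindex⟩, mul_one]

/-- The stabilizer of `a` in the normalizer of `P`, as a subgroup of `G`. -/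
def inertiaSubgroup (a : ExtensionObstruction P A) : Subgroup G :=
  (MulAction.stabilizer (Subgroup.normalizer (P : Set G)) a).map
    (Subgroup.normalizer (P : Set G)).subtype

theorem le_inertiaSubgroup (a : ExtensionObstruction P A) : P ≤ inertiaSubgroup a := fun x hx => by
  obtain ⟨μ, rfl⟩ := QuotientGroup.mk_surjective a
  exact ⟨⟨x, Subgroup.le_normalizer hx⟩, congrArg _ (conj_smul_of_mem hx μ), rfl⟩

theorem relIndex_inertiaSubgroup (a : ExtensionObstruction P A) :
    (inertiaSubgroup a).relIndex (Subgroup.normalizer (P : Set G)) =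
      (MulAction.orbit (Subgroup.normalizer (P : Set G)) a).ncard := by
  rw [← MulAction.index_stabilizer, Subgroup.relIndex, Subgroup.subgroupOf, inertiaSubgroup,
    Subgroup.comap_map_eq_self_of_injective (Subgroup.subtype_injective _)]

theorem inertiaSubgroup_inv (a : ExtensionObstruction P A) :
    inertiaSubgroup a⁻¹ = inertiaSubgroup a := by
  refine congrArg (Subgroup.map _) (Subgroup.ext fun n => ?_)
  rw [MulAction.mem_stabilizer_iff, MulAction.mem_stabilizer_iff, smul_inv', inv_inj]

theorem exists_inertiaSubgroup_extension [Finite G] (hP : (Nat.card P).Coprime P.index)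
    (a : ExtensionObstruction P A) :
    ∃ ν : inertiaSubgroup a →* A,
      (ν.comp (Subgroup.inclusion (le_inertiaSubgroup a)) : ExtensionObstruction P A) = a := by
  have hPB := le_inertiaSubgroup a
  obtain ⟨μ, rfl⟩ := QuotientGroup.mk_surjective a
  have hindex : (Subgroup.inclusion hPB).range.index ∣ P.index := by
    rw [Subgroup.inclusion_range]
    exact ⟨_, (Subgroup.relIndex_mul_index hPB).symm⟩
  have hinv : ∀ g x y, g⁻¹ * Subgroup.inclusion hPB x * g = Subgroup.inclusion hPB y →
      μ y = μ x := by
    rintro ⟨_, n, hn, rfl⟩ x y hxy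
    rw [← DFunLike.congr_fun (conj_smul_eq_of_smul_obstruction_eq hP hn) x, conj_smul_apply]
    refine congrArg μ (Subtype.ext ((congrArg Subtype.val hxy).symm.trans ?_))
    simp
  obtain ⟨ν, hν⟩ := exists_extension_of_coprime (Subgroup.inclusion hPB)
    (Subgroup.inclusion_injective hPB) (hP.coprime_dvd_right hindex) μ hinv
  exact ⟨ν, congrArg _ hν⟩

end Obstruction

section ObstructionSpace

theorem iSupIndep_iSup_fiber {ι κ α : Type*} [CompleteLattice α] [IsModularLattice α]
    [Finite ι] {t : ι → α} (ht : iSupIndep t) (q : ι → κ) :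
    iSupIndep fun b => ⨆ i ∈ q ⁻¹' {b}, t i := fun b => by
  refine (ht.disjoint_biSup_biSup' (s := q ⁻¹' {b}) (t := q ⁻¹' {b}ᶜ) ?_
    (Set.toFinite _)).mono_right ?_
  · exact Set.disjoint_left.mpr fun i hi hi' => hi' hi
  · exact iSup₂_le fun b' hb' => biSup_mono fun i hi => hi.trans_ne hb'

variable {k G V : Type*} [Field k] [Group G] [AddCommGroup V] [Module k V] {P : Subgroup G}

/-- The part of a representation on which `P` acts through linear characters of class `a` modulo
those extending to `G`. -/
noncomputable def obstructionSpace (ρ : Representation k G V) (a : ExtensionObstruction P kˣ) :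
    Submodule k V :=
  ⨆ μ ∈ QuotientGroup.mk ⁻¹' {a}, weightSpace (ρ.comp P.subtype) μ

theorem weightSpace_le_obstructionSpace (ρ : Representation k G V) (μ : P →* kˣ) :
    weightSpace (ρ.comp P.subtype) μ ≤ obstructionSpace ρ (μ : ExtensionObstruction P kˣ) :=
  le_iSup₂_of_le μ rfl le_rfl

theorem map_weightSpace_le_smul (ρ : Representation k G V) (n : Subgroup.normalizer (P : Set G))
    (μ : P →* kˣ) :
    (weightSpace (ρ.comp P.subtype) μ).map (ρ n) ≤ weightSpace (ρ.comp P.subtype) (n • μ) := by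
  rintro _ ⟨v, hv, rfl⟩
  refine mem_weightSpace.mpr fun x => ?_
  have hx : (x : G) * n = n * (P.normalizerMonoidHom n⁻¹ x : P) := by simp [mul_assoc]
  rw [conj_smul_apply, ← map_smul, ← mem_weightSpace.mp hv]
  simp only [MonoidHom.comp_apply, Subgroup.subtype_apply, ← Module.End.mul_apply, ← map_mul, hx]

theorem map_obstructionSpace_le_smul (ρ : Representation k G V)
    (n : Subgroup.normalizer (P : Set G)) (a : ExtensionObstruction P kˣ) :
    (obstructionSpace ρ a).map (ρ n) ≤ obstructionSpace ρ (n • a) := by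
  simp only [obstructionSpace, Submodule.map_iSup]
  refine iSup₂_le fun μ hμ => (map_weightSpace_le_smul ρ n μ).trans ?_
  exact le_iSup₂_of_le (n • μ) (congrArg (n • ·) hμ) le_rfl

variable [FiniteDimensional k V]

theorem finrank_obstructionSpace_smul (ρ : Representation k G V)
    (n : Subgroup.normalizer (P : Set G)) (a : ExtensionObstruction P kˣ) :
    Module.finrank k (obstructionSpace ρ (n • a)) = Module.finrank k (obstructionSpace ρ a) := by
  have hle (n : Subgroup.normalizer (P : Set G)) (a : ExtensionObstruction P kˣ) :
      Module.finrank k (obstructionSpace ρ a) ≤ Module.finrank k (obstructionSpace ρ (n • a)) := by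
    rw [(Submodule.equivMapOfInjective _ (ρ.apply_bijective n).injective _).finrank_eq]
    exact Submodule.finrank_mono (map_obstructionSpace_le_smul ρ n a)
  refine le_antisymm ?_ (hle n a)
  exact (hle n⁻¹ (n • a)).trans_eq (by rw [inv_smul_smul])

variable [Finite G]

theorem sum_finrank_obstructionSpace_le (ρ : Representation k G V)
    (s : Finset (ExtensionObstruction P kˣ)) :
    ∑ a ∈ s, Module.finrank k (obstructionSpace ρ a) ≤ Module.finrank k V :=
  finrank_top k V ▸ sum_finrank_le_of_iSupIndep
    (iSupIndep_iSup_fiber (iSupIndep_weightSpace _) _) s fun _ _ => le_top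

theorem sum_ncard_orbit_mul_finrank_le (ρ : Representation k G V)
    {s : Finset (ExtensionObstruction P kˣ)}
    (hs : (s : Set (ExtensionObstruction P kˣ)).Pairwise fun a b =>
      b ∉ MulAction.orbit (Subgroup.normalizer (P : Set G)) a) :
    ∑ a ∈ s, (MulAction.orbit (Subgroup.normalizer (P : Set G)) a).ncard *
      Module.finrank k (obstructionSpace ρ a) ≤ Module.finrank k V := by
  obtain ⟨O, -, hsum⟩ := exists_finset_sum_eq_sum_ncard_orbit
    (w := fun a => Module.finrank k (obstructionSpace ρ a)) (finrank_obstructionSpace_smul ρ) hs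
  exact hsum.ge.trans (sum_finrank_obstructionSpace_le ρ O)

end ObstructionSpace

section Restriction

theorem card_ker_restrict_le_index {k G : Type*} [Field k] [Group G] (B : Subgroup G)
    [B.FiniteIndex] :
    Nat.card (MonoidHom.compHom' (P := kˣ) B.subtype).ker ≤ B.index := by
  have := Fintype.ofFinite (G ⧸ B)
  have hchar : LinearIndependent k fun (l : (MonoidHom.compHom' (P := kˣ) B.subtype).ker) x =>
      (l.1 x : k) :=
    (linearIndependent_coe_monoidHom_units G k).comp _ Subtype.val_injective
  have hquot : LinearIndependent k fun (l : (MonoidHom.compHom' (P := kˣ) B.subtype).ker)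
      (q : G ⧸ B) => (l.1 q.out : k) := by
    refine LinearIndependent.of_comp (LinearMap.funLeft k k QuotientGroup.mk) ?_
    convert hchar using 3 with l x
    obtain ⟨b, hb⟩ := QuotientGroup.mk_out_eq_mul B x
    have hl : l.1 b = 1 := DFunLike.congr_fun l.2 b
    simp [hb, hl]
  have := hquot.finite
  have := Fintype.ofFinite (MonoidHom.compHom' (P := kˣ) B.subtype).ker
  rw [Nat.card_eq_fintype_card, Subgroup.index, Nat.card_eq_fintype_card]
  exact hquot.fintype_card_le_finrank.trans_eq (Module.finrank_fintype_fun_eq_card k)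

theorem restrict_normalizer_injective {G A : Type*} [Group G] [Finite G] [CommGroup A] {p : ℕ}
    [Fact p.Prime] (P : Sylow p G) :
    Function.Injective (MonoidHom.compHom' (P := A)
      (Subgroup.normalizer ((P : Subgroup G) : Set G)).subtype) := by
  refine (injective_iff_map_eq_one _).mpr fun l hl => MonoidHom.ker_eq_top_iff.mp ?_
  have hN : Subgroup.normalizer ((P : Subgroup G) : Set G) ≤ l.ker := fun x hx =>
    MonoidHom.mem_ker.mpr (DFunLike.congr_fun hl ⟨x, hx⟩)
  rw [← Sylow.normalizer_sup_eq_top' P (Subgroup.le_normalizer.trans hN)]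
  exact (sup_eq_right.mpr hN).symm

theorem card_ker_restrict_le_relIndex_normalizer {k G : Type*} [Field k] [Group G] [Finite G]
    {p : ℕ} [Fact p.Prime] (P : Sylow p G) (B : Subgroup G) :
    Nat.card (MonoidHom.compHom' (P := kˣ) B.subtype).ker ≤
      B.relIndex (Subgroup.normalizer ((P : Subgroup G) : Set G)) := by
  let N := Subgroup.normalizer ((P : Subgroup G) : Set G)
  refine le_trans ?_ (card_ker_restrict_le_index (k := k) (B.subgroupOf N))
  refine Nat.card_le_card_of_injective (fun l => ⟨l.1.comp N.subtype, MonoidHom.ext fun x => ?_⟩)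
    fun l l' h => Subtype.ext (restrict_normalizer_injective P (congrArg Subtype.val h))
  exact DFunLike.congr_fun l.2 ⟨x, x.2⟩

end Restriction

section Covers

variable {G : Type} [Group G] {P : Subgroup G} {f : G → ℂ} {a : ExtensionObstruction P ℂˣ}

/-- `f` lies over a linear character of the inertia subgroup of `a` that restricts to a linear
character of `P` of class `a`. -/
def CoversObstruction (f : G → ℂ) (a : ExtensionObstruction P ℂˣ) : Prop :=
  ∃ ν : inertiaSubgroup a →* ℂˣ,
    (ν.comp (Subgroup.inclusion (le_inertiaSubgroup a)) : ExtensionObstruction P ℂˣ) = a ∧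
      LiesOver f ν

theorem CoversObstruction.smul (h : CoversObstruction f a) (l : G →* ℂˣ) :
    CoversObstruction (l • f) a := by
  obtain ⟨ν, hν, hf⟩ := h
  exact ⟨l.comp (inertiaSubgroup a).subtype * ν, (mk_restrict_mul _ l ν).trans hν, hf.smul l⟩

theorem CoversObstruction.comp_inv (h : CoversObstruction f a) :
    CoversObstruction (fun g => f g⁻¹) a⁻¹ := by
  suffices ∀ (B : Subgroup G) (_ : B = inertiaSubgroup a⁻¹) (hPB : P ≤ B) (ν : B →* ℂˣ),
      (ν.comp (Subgroup.inclusion hPB) : ExtensionObstruction P ℂˣ) = a⁻¹ →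
        LiesOver (fun g => f g⁻¹) ν → CoversObstruction (fun g => f g⁻¹) a⁻¹ by
    obtain ⟨ν, hν, hf⟩ := h
    exact this _ (inertiaSubgroup_inv a).symm (le_inertiaSubgroup a) ν⁻¹ (congrArg Inv.inv hν)
      hf.comp_inv
  rintro _ rfl _ ν hν hf
  exact ⟨ν, hν, hf⟩

theorem CoversObstruction.eq_one_of_charDeg_eq_one [Finite G] (hf : f ∈ Irr G)
    (h : CoversObstruction f a) (h1 : charDeg f = 1) : a = 1 := by
  obtain ⟨l, rfl⟩ := exists_coe_eq_of_charDeg_eq_one hf h1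
  obtain ⟨ν, hν, hf⟩ := h
  have := Fintype.ofFinite (inertiaSubgroup a)
  have hres : l.comp (inertiaSubgroup a).subtype = ν := by
    by_contra hne
    refine hf ((finsum_eq_sum_of_fintype _).trans (Eq.trans ?_ (sum_hom_units_eq_zero
      ((Units.coeHom ℂ).comp (ν⁻¹ * l.comp (inertiaSubgroup a).subtype)) fun h => hne ?_)))
    · exact Finset.sum_congr rfl fun x _ => (Units.val_mul _ _).symm
    · refine (inv_mul_eq_one.mp (MonoidHom.ext fun x => Units.ext ?_)).symm
      exact DFunLike.congr_fun h x
  rw [← hν, obstruction_eq_one_iff]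
  exact ⟨l, by rw [← hres]; rfl⟩

variable [Finite G] {V : Type*} [AddCommGroup V] [Module ℂ V] [FiniteDimensional ℂ V]
  {ρ : Representation ℂ G V}

theorem card_map_restrict_stabilizer_le (h : CoversObstruction ρ.character a) :
    Nat.card ((MulAction.stabilizer (G →* ℂˣ) ρ.character).map
      (MonoidHom.compHom' (P := ℂˣ) (inertiaSubgroup a).subtype)) ≤
        Module.finrank ℂ (obstructionSpace ρ a) := by
  obtain ⟨ν, hν, hlies⟩ := h
  let T := (MulAction.stabilizer (G →* ℂˣ) ρ.character).map
    (MonoidHom.compHom' (P := ℂˣ) (inertiaSubgroup a).subtype)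
  let W (η : T) := weightSpace (ρ.comp (inertiaSubgroup a).subtype) (η * ν)
  have := Fintype.ofFinite T
  have hindep : iSupIndep W :=
    (iSupIndep_weightSpace _).comp fun _ _ h => Subtype.ext (mul_right_cancel h)
  have hpos (η : T) : 1 ≤ Module.finrank ℂ (W η) := by
    obtain ⟨_, l, hl, rfl⟩ := η
    refine Nat.one_le_iff_ne_zero.mpr (Submodule.finrank_eq_zero.not.mpr ?_)
    have hlies' := hlies.smul l
    rw [MulAction.mem_stabilizer_iff.mp hl] at hlies'
    exact (liesOver_character_iff ρ _).mp hlies'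
  have hle : ∀ η ∈ Finset.univ, W η ≤ obstructionSpace ρ a := by
    rintro ⟨_, l, -, rfl⟩ -
    have hclass := (mk_restrict_mul (le_inertiaSubgroup a) l ν).trans hν
    refine (weightSpace_le_comp _ _ (Subgroup.inclusion (le_inertiaSubgroup a))).trans ?_
    exact (weightSpace_le_obstructionSpace ρ _).trans_eq (congrArg _ hclass)
  calc Nat.card T = ∑ _η : T, 1 := by rw [Finset.sum_const, smul_eq_mul, mul_one,
        Finset.card_univ, Nat.card_eq_fintype_card]
    _ ≤ ∑ η : T, Module.finrank ℂ (W η) := Finset.sum_le_sum fun η _ => hpos η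
    _ ≤ _ := sum_finrank_le_of_iSupIndep hindep _ hle

theorem card_le_card_map_mul_card_ker {H K : Type*} [Group H] [Finite H] [Group K] (φ : H →* K)
    (T : Subgroup H) : Nat.card T ≤ Nat.card (T.map φ) * Nat.card φ.ker := by
  rw [← Subgroup.relIndex_ker, ← Subgroup.index_mul_card (φ.ker.subgroupOf T)]
  exact Nat.mul_le_mul_left _ (Nat.card_le_card_of_injective (fun x => ⟨x.1.1, x.2⟩)
    fun _ _ h => Subtype.ext (Subtype.ext (Subtype.mk.inj h)))

theorem card_stabilizer_character_le {p : ℕ} [Fact p.Prime] {P : Sylow p G}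
    {a : ExtensionObstruction (P : Subgroup G) ℂˣ} (h : CoversObstruction ρ.character a) :
    Nat.card (MulAction.stabilizer (G →* ℂˣ) ρ.character) ≤
      (MulAction.orbit (Subgroup.normalizer ((P : Subgroup G) : Set G)) a).ncard *
        Module.finrank ℂ (obstructionSpace ρ a) := by
  rw [mul_comm, ← relIndex_inertiaSubgroup]
  exact (card_le_card_map_mul_card_ker _ _).trans
    (Nat.mul_le_mul (card_map_restrict_stabilizer_le h)
      (card_ker_restrict_le_relIndex_normalizer P _))

end Covers

section InverseOrbits

variable {H A : Type*} [Group H] [Group A] [MulDistribMulAction H A] {a : A}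

theorem inv_notMem_orbit (hH : Odd (Nat.card H)) (ha : a⁻¹ ≠ a) : a⁻¹ ∉ MulAction.orbit H a := by
  rintro ⟨h, hh : h • a = a⁻¹⟩
  have hsq : h ^ 2 ∈ MulAction.stabilizer H a := by
    rw [MulAction.mem_stabilizer_iff, pow_two, mul_smul, hh, smul_inv', hh, inv_inv]
  have hmem : h ∈ Subgroup.zpowers (h ^ 2) :=
    mem_zpowers_pow_iff.mpr
      (Nat.coprime_two_left.mpr (hH.of_dvd_nat (orderOf_dvd_natCard h)))
  exact ha (hh.symm.trans (Subgroup.zpowers_le.mpr hsq hmem))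

theorem ncard_orbit_inv : (MulAction.orbit H a⁻¹).ncard = (MulAction.orbit H a).ncard := by
  rw [← Set.ncard_image_of_injective (MulAction.orbit H a) inv_injective]
  refine congrArg Set.ncard ((Set.range_comp Inv.inv fun h : H => h • a).symm ▸ ?_)
  exact congrArg Set.range (funext fun h => smul_inv' h a)

theorem natCard_eq_one_add_two_mul_ncard_orbit [Finite A] (ha : a ≠ 1)
    (hinv : a⁻¹ ∉ MulAction.orbit H a)
    (hall : ∀ b : A, b ≠ 1 → b ∈ MulAction.orbit H a ∨ b ∈ MulAction.orbit H a⁻¹) :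
    Nat.card A = 1 + 2 * (MulAction.orbit H a).ncard := by
  have hone {b : A} (hb : b ≠ 1) : (1 : A) ∉ MulAction.orbit H b := by
    rintro ⟨h, hh : h • b = 1⟩
    exact hb (by rw [← inv_smul_smul h b, hh, smul_one])
  have hdisj : Disjoint (MulAction.orbit H a) (MulAction.orbit H a⁻¹) :=
    Set.disjoint_left.mpr fun b hb hb' => hinv <| by
      rw [← MulAction.orbit_eq_iff.mpr hb]
      exact MulAction.mem_orbit_symm.mp hb'
  have hunion : (Set.univ : Set A) =
      insert 1 (MulAction.orbit H a ∪ MulAction.orbit H a⁻¹) :=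
    (Set.eq_univ_of_forall fun b => or_iff_not_imp_left.mpr (hall b)).symm
  rw [← Set.ncard_univ, hunion, Set.ncard_insert_of_notMem
    fun h => h.elim (hone ha) (hone (inv_ne_one.mpr ha)), Set.ncard_union_eq hdisj, ncard_orbit_inv]
  ring

end InverseOrbits

section SmallAverage

variable {G : Type} [Group G]

theorem charDeg_comp_inv (f : G → ℂ) : charDeg (fun g => f g⁻¹) = charDeg f := by
  simp only [charDeg, inv_one]

theorem stabilizer_comp_inv (f : G → ℂ) : MulAction.stabilizer (G →* ℂˣ) (fun g => f g⁻¹) =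
    MulAction.stabilizer (G →* ℂˣ) f := by
  have hle (f : G → ℂ) : MulAction.stabilizer (G →* ℂˣ) f ≤
      MulAction.stabilizer (G →* ℂˣ) (fun g => f g⁻¹) := fun l hl => by
    rw [← inv_mem_iff, MulAction.mem_stabilizer_iff]
    funext g
    have hg := congrFun hl g⁻¹
    rw [twist_smul_apply, map_inv] at hg
    exact hg
  refine le_antisymm ((hle _).trans_eq ?_) (hle f)
  simp only [inv_inv]

theorem inv_notMem_orbit_obstruction {P : Subgroup G}
    {a : ExtensionObstruction P ℂˣ} (hodd : Odd (Nat.card G)) (ha : a ≠ 1) :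
    a⁻¹ ∉ MulAction.orbit (Subgroup.normalizer (P : Set G)) a := by
  have hdvd (B : Subgroup G) : Odd (Nat.card B) :=
    hodd.of_dvd_nat (Subgroup.card_subgroup_dvd_card B)
  refine inv_notMem_orbit (hdvd _) fun hinv => ha ?_
  have hsq : a ^ 2 = 1 := by rw [pow_two, mul_eq_one_iff_inv_eq, hinv]
  rw [← pow_one a, ← (Nat.coprime_two_left.mpr (hdvd P)).gcd_eq_one]
  exact pow_gcd_eq_one.mpr ⟨hsq, pow_natCard_obstruction a⟩

theorem ncard_orbit_le_charDeg [Finite G] {P : Subgroup G} {f : G → ℂ}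
    {a : ExtensionObstruction P ℂˣ} (hf : f ∈ Irr G) (h : CoversObstruction f a) :
    (MulAction.orbit (Subgroup.normalizer (P : Set G)) a).ncard ≤ charDeg f := by
  obtain ⟨V, _, _, _, ρ, rfl⟩ := exists_representation_of_mem_Irr hf
  have hpos : Module.finrank ℂ (obstructionSpace ρ a) ≠ 0 := fun h0 =>
    Nat.card_pos.ne' (Nat.le_zero.mp ((card_map_restrict_stabilizer_le h).trans_eq h0))
  have hle := sum_ncard_orbit_mul_finrank_le ρ (s := {a}) (by simp)
  rw [Finset.sum_singleton, ← charDeg_character ρ] at hle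
  exact (Nat.le_mul_of_pos_right _ (Nat.pos_of_ne_zero hpos)).trans hle

variable [Finite G] {p : ℕ} [Fact p.Prime] {P : Sylow p G} {f f' : G → ℂ}
  {a b : ExtensionObstruction (P : Subgroup G) ℂˣ}

theorem exists_mem_Irr_coversObstruction (a : ExtensionObstruction (P : Subgroup G) ℂˣ) :
    ∃ f ∈ Irr G, ¬ p ∣ charDeg f ∧ CoversObstruction f a := by
  obtain ⟨ν, hν⟩ := exists_inertiaSubgroup_extension P.card_coprime_index a
  have hindex : ¬ p ∣ (inertiaSubgroup a).index := fun h =>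
    P.not_dvd_index (h.trans (Subgroup.index_dvd_of_le (le_inertiaSubgroup a)))
  obtain ⟨f, hf, hpf, hfν⟩ := exists_mem_Irr_liesOver ν hindex
  exact ⟨f, hf, hpf, ν, hν, hfν⟩

theorem card_mul_card_stabilizer_le_charDeg (hf : f ∈ Irr G)
    {s : Finset (ExtensionObstruction (P : Subgroup G) ℂˣ)}
    (hs : (s : Set (ExtensionObstruction (P : Subgroup G) ℂˣ)).Pairwise fun a b =>
      b ∉ MulAction.orbit (Subgroup.normalizer ((P : Subgroup G) : Set G)) a)
    (h : ∀ a ∈ s, CoversObstruction f a) :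
    s.card * Nat.card (MulAction.stabilizer (G →* ℂˣ) f) ≤ charDeg f := by
  obtain ⟨V, _, _, _, ρ, rfl⟩ := exists_representation_of_mem_Irr hf
  rw [charDeg_character, ← smul_eq_mul]
  exact (Finset.card_nsmul_le_sum _ _ _ fun a ha => card_stabilizer_character_le (h a ha)).trans
    (sum_ncard_orbit_mul_finrank_le ρ hs)

theorem two_mul_card_stabilizer_le_charDeg (hf : f ∈ Irr G) (ha : CoversObstruction f a)
    (hb : CoversObstruction f' b) (hff' : f' ∈ MulAction.orbit (G →* ℂˣ) f)
    (hab : b ∉ MulAction.orbit (Subgroup.normalizer ((P : Subgroup G) : Set G)) a) :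
    2 * Nat.card (MulAction.stabilizer (G →* ℂˣ) f) ≤ charDeg f := by
  classical
  obtain ⟨l, rfl⟩ := hff'
  have hb' : CoversObstruction f b := inv_smul_smul l f ▸ hb.smul l⁻¹
  have hne : a ≠ b := fun h => hab (h ▸ MulAction.mem_orbit_self a)
  rw [← Finset.card_pair hne]
  refine card_mul_card_stabilizer_le_charDeg hf ?_ (by simp [ha, hb'])
  rw [Finset.coe_pair, Set.pairwise_pair]
  exact fun _ => ⟨hab, fun h => hab (MulAction.mem_orbit_symm.mp h)⟩

theorem exists_natCard_obstruction_eq_pow (P : Sylow p G) :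
    ∃ n, Nat.card (ExtensionObstruction (P : Subgroup G) ℂˣ) = p ^ n := by
  obtain ⟨n, hn⟩ := IsPGroup.iff_card.mp P.isPGroup'
  exact IsPGroup.iff_card.mp fun a => ⟨n, hn ▸ pow_natCard_obstruction a⟩

theorem sum_div_card_stabilizer_lt_one_of_acd_lt_two {n : ℕ}
    (h : acd {f ∈ Irr G | ¬ n ∣ charDeg f} < 2) {C : Finset (G → ℂ)}
    (hC : ∀ f ∈ C, f ∈ Irr G ∧ ¬ n ∣ charDeg f)
    (hdisj : (C : Set (G → ℂ)).Pairwise fun f f' => f' ∉ MulAction.orbit (G →* ℂˣ) f) :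
    ∑ f ∈ C, ((charDeg f : ℝ) - 2) / Nat.card (MulAction.stabilizer (G →* ℂˣ) f) < 1 :=
  sum_charDeg_sub_two_div_card_stabilizer_lt_one (Set.sep_subset _ _)
    (fun l _ hf => ⟨smul_mem_Irr l hf.1, by rw [charDeg_smul]; exact hf.2⟩) h hC hdisj

theorem comp_inv_notMem_orbit (hodd : Odd (Nat.card G))
    (h : acd {f ∈ Irr G | ¬ p ∣ charDeg f} < 2) (ha : a ≠ 1) (hf : f ∈ Irr G)
    (hpf : ¬ p ∣ charDeg f) (hfa : CoversObstruction f a) :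
    (fun g => f g⁻¹) ∉ MulAction.orbit (G →* ℂˣ) f := fun horbit => by
  have hstab := two_mul_card_stabilizer_le_charDeg hf hfa hfa.comp_inv horbit
    (inv_notMem_orbit_obstruction hodd ha)
  have hsum := sum_div_card_stabilizer_lt_one_of_acd_lt_two h (C := {f}) (by simp [hf, hpf])
    (by simp)
  rw [Finset.sum_singleton, div_lt_one (Nat.cast_pos.mpr Nat.card_pos), sub_lt_iff_lt_add] at hsum
  have hlt : charDeg f < Nat.card (MulAction.stabilizer (G →* ℂˣ) f) + 2 := by exact_mod_cast hsum
  obtain ⟨m, hm⟩ := odd_charDeg hodd hf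
  exact ha (hfa.eq_one_of_charDeg_eq_one hf (by omega))

theorem charDeg_eq_three_and_card_stabilizer_eq_three (hodd : Odd (Nat.card G))
    (h : acd {f ∈ Irr G | ¬ p ∣ charDeg f} < 2) (ha : a ≠ 1) (hf : f ∈ Irr G)
    (hpf : ¬ p ∣ charDeg f) (hfa : CoversObstruction f a) :
    charDeg f = 3 ∧ Nat.card (MulAction.stabilizer (G →* ℂˣ) f) = 3 := by
  classical
  have hinv := comp_inv_notMem_orbit hodd h ha hf hpf hfa
  have hne : f ≠ fun g => f g⁻¹ := fun he => hinv (he ▸ MulAction.mem_orbit_self f)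
  have hstab := card_mul_card_stabilizer_le_charDeg hf (s := {a}) (by simp) (by simp [hfa])
  have hsum := sum_div_card_stabilizer_lt_one_of_acd_lt_two h (C := {f, fun g => f g⁻¹})
    (by simp [hf, hpf, comp_inv_mem_Irr hf, charDeg_comp_inv]) (by
      rw [Finset.coe_pair, Set.pairwise_pair]
      exact fun _ => ⟨hinv, fun h => hinv (MulAction.mem_orbit_symm.mp h)⟩)
  rw [Finset.sum_pair hne, charDeg_comp_inv, stabilizer_comp_inv, ← add_div,
    div_lt_one (Nat.cast_pos.mpr Nat.card_pos)] at hsum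
  have hlt : 2 * charDeg f < Nat.card (MulAction.stabilizer (G →* ℂˣ) f) + 4 := by
    rify; linarith
  have hdeg : charDeg f ≠ 1 := fun h1 => ha (hfa.eq_one_of_charDeg_eq_one hf h1)
  obtain ⟨m, hm⟩ := odd_charDeg hodd hf
  rw [Finset.card_singleton] at hstab
  omega

theorem mem_orbit_or_mem_orbit_inv (hodd : Odd (Nat.card G))
    (h : acd {f ∈ Irr G | ¬ p ∣ charDeg f} < 2) (ha : a ≠ 1) (hb : b ≠ 1) :
    b ∈ MulAction.orbit (Subgroup.normalizer ((P : Subgroup G) : Set G)) a ∨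
      b ∈ MulAction.orbit (Subgroup.normalizer ((P : Subgroup G) : Set G)) a⁻¹ := by
  classical
  by_contra! hcon
  obtain ⟨f, hf, hpf, hfa⟩ := exists_mem_Irr_coversObstruction a
  obtain ⟨f', hf', hpf', hfb⟩ := exists_mem_Irr_coversObstruction b
  obtain ⟨hd, ht⟩ := charDeg_eq_three_and_card_stabilizer_eq_three hodd h ha hf hpf hfa
  obtain ⟨hd', ht'⟩ := charDeg_eq_three_and_card_stabilizer_eq_three hodd h hb hf' hpf' hfb
  have hinv := comp_inv_notMem_orbit hodd h ha hf hpf hfa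
  have hfinv := comp_inv_mem_Irr hf
  have hff' : f' ∉ MulAction.orbit (G →* ℂˣ) f := fun horbit => by
    have := two_mul_card_stabilizer_le_charDeg hf hfa hfb horbit hcon.1
    omega
  have hinvf' : f' ∉ MulAction.orbit (G →* ℂˣ) (fun g => f g⁻¹) := fun horbit => by
    have := two_mul_card_stabilizer_le_charDeg hfinv hfa.comp_inv hfb horbit hcon.2
    rw [charDeg_comp_inv, stabilizer_comp_inv] at this
    omega
  have hne {x y : G → ℂ} (hxy : y ∉ MulAction.orbit (G →* ℂˣ) x) : x ≠ y := fun he =>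
    hxy (he ▸ MulAction.mem_orbit_self x)
  have hsymm {x y : G → ℂ} (hxy : y ∉ MulAction.orbit (G →* ℂˣ) x) :
      x ∉ MulAction.orbit (G →* ℂˣ) y := fun h => hxy (MulAction.mem_orbit_symm.mp h)
  have hsum := sum_div_card_stabilizer_lt_one_of_acd_lt_two h (C := {f, fun g => f g⁻¹, f'})
    (by simp [hf, hpf, hfinv, charDeg_comp_inv, hf', hpf']) (by
      rw [Finset.coe_insert, Finset.coe_pair, Set.pairwise_insert, Set.pairwise_pair]
      simp [hinv, hff', hinvf', hsymm hinv, hsymm hff', hsymm hinvf'])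
  rw [Finset.sum_insert (by simp [hne hinv, hne hff']), Finset.sum_pair (hne hinvf'),
    charDeg_comp_inv, stabilizer_comp_inv, hd, ht, hd', ht'] at hsum
  norm_num at hsum

theorem natCard_obstruction_eq_three_or_seven (hodd : Odd (Nat.card G))
    (h : acd {f ∈ Irr G | ¬ p ∣ charDeg f} < 2) (ha : a ≠ 1) :
    Nat.card (ExtensionObstruction (P : Subgroup G) ℂˣ) = 3 ∨
      Nat.card (ExtensionObstruction (P : Subgroup G) ℂˣ) = 7 := by
  obtain ⟨f, hf, hpf, hfa⟩ := exists_mem_Irr_coversObstruction a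
  obtain ⟨hdeg, -⟩ := charDeg_eq_three_and_card_stabilizer_eq_three hodd h ha hf hpf hfa
  have hcard := natCard_eq_one_add_two_mul_ncard_orbit ha
    (inv_notMem_orbit_obstruction hodd ha) fun b => mem_orbit_or_mem_orbit_inv hodd h ha
  have hle := ncard_orbit_le_charDeg hf hfa
  have horbit :
      Odd (MulAction.orbit (Subgroup.normalizer ((P : Subgroup G) : Set G)) a).ncard := by
    rw [← relIndex_inertiaSubgroup]
    exact hodd.of_dvd_nat ((Subgroup.relIndex_dvd_card _ _).trans
      (Subgroup.card_subgroup_dvd_card _))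
  obtain ⟨m, hm⟩ := horbit
  omega

theorem obstruction_eq_one_of_acd_lt_two (hodd : Odd (Nat.card G)) (hp7 : p ≠ 7)
    (h : acd {f ∈ Irr G | ¬ p ∣ charDeg f} < 2)
    (a : ExtensionObstruction (P : Subgroup G) ℂˣ) : a = 1 := by
  by_contra ha
  obtain ⟨f, hf, hpf, hfa⟩ := exists_mem_Irr_coversObstruction a
  rw [(charDeg_eq_three_and_card_stabilizer_eq_three hodd h ha hf hpf hfa).1] at hpf
  obtain ⟨n, hn⟩ := exists_natCard_obstruction_eq_pow P
  have heq {q : ℕ} (hq : q.Prime) (hqn : q = p ^ n) : q = p :=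
    (Nat.prime_dvd_prime_iff_eq hq Fact.out).mp (hq.dvd_of_dvd_pow hqn.dvd)
  obtain h3 | h7 := natCard_obstruction_eq_three_or_seven hodd h ha
  · exact hpf (heq Nat.prime_three (h3.symm.trans hn)).symm.dvd
  · exact hp7 (heq (by norm_num) (h7.symm.trans hn)).symm

end SmallAverage

theorem odd_order_avg_pprime_lt_two_implies_pNilpotent
    (G : Type) [Group G] [Fintype G] (hodd : Odd (Nat.card G))
    (p : ℕ) (hp : p.Prime) (hpodd : Odd p) (hp7 : p ≠ 7)
    (h : acd {f ∈ Irr G | ¬ p ∣ charDeg f} < 2) :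
    HasNormalPComplement p G := by
  have : Fact p.Prime := ⟨hp⟩
  obtain ⟨P⟩ : Nonempty (Sylow p G) := inferInstance
  exact hasNormalPComplement_of_forall_exists_extension P fun μ =>
    obstruction_eq_one_iff.mp (obstruction_eq_one_of_acd_lt_two (P := P) hodd hp7 h μ)
end
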